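/- arXiv:1808.09535 — 11 statements merged into one kernel-verified Lean document; each statement's English description precedes it below -/
import Mathlib

section
/- Let n, t, w be positive integers with t + w ≤ n. If {C_1, …, C_M} is an (n,t,w)-LPC code of size M, then M ≤ ∑_{i=0}^{w} binom(n−t, i). -/
/-!
Fix any set `S` of `t` coordinates. Each codeset contains a word whose support avoids `S`.
Words chosen in this way from different codesets are distinct, because the codesets are
pairwise disjoint, and each is determined by its support, a subset of size at most `w` of the
`n - t` coordinates outside `S`. Hence there are at most `∑ i ≤ w, (n - t).choose i` codesets.
-/

/-- The Hamming weight of a binary word. -/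
def wt {X : Type*} [Fintype X] (u : X → Bool) : ℕ :=
  (Finset.univ.filter fun x => u x = true).card

/-- The support of a binary word. -/
def supp {X : Type*} [Fintype X] (u : X → Bool) : Finset X :=
  Finset.univ.filter fun x => u x = true

/-- An `(n,t,w)`-low-power cooling (LPC) code: a family of pairwise disjoint codesets of
binary words of weight at most `w`, such that for every set `S` of `t` coordinates and
every codeset there is a codeword in the codeset whose support avoids `S`. -/
def IsLPCCode {X : Type*} [Fintype X] [DecidableEq X] {ι : Type*} (t w : ℕ)
    (C : ι → Set (X → Bool)) : Prop :=
  (∀ i, ∀ u ∈ C i, wt u ≤ w) ∧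
  (Pairwise fun i j => Disjoint (C i) (C j)) ∧
  (∀ S : Finset X, S.card = t → ∀ i, ∃ u ∈ C i, supp u ∩ S = ∅)

/-- If `{C_1, …, C_M}` is an `(n,t,w)`-LPC code of size `M`, then
`M ≤ ∑_{i=0}^{w} binom(n−t, i)`. -/
theorem lpc_upper_bound (n t w M : ℕ) (hn : 0 < n) (ht : 0 < t) (hw : 0 < w)
    (htw : t + w ≤ n) (C : Fin M → Set (Fin n → Bool)) (hC : IsLPCCode t w C) :
    M ≤ ∑ i ∈ Finset.range (w + 1), (n - t).choose i := by
  obtain ⟨S, -, hS⟩ := Finset.exists_subset_card_eq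
      (s := (Finset.univ : Finset (Fin n))) (n := t) (by simp; omega)
  obtain ⟨hwt, hdisj, hcov⟩ := hC
  choose u hu hus using hcov S hS
  let T : Finset (Finset (Fin n)) :=
    (Finset.range (w + 1)).biUnion fun i => Finset.powersetCard i Sᶜ
  have hmaps : ∀ i ∈ (Finset.univ : Finset (Fin M)), supp (u i) ∈ T := by
    intro i _
    refine Finset.mem_biUnion.2 ⟨wt (u i), ?_, ?_⟩
    · exact Finset.mem_range.2 (Nat.lt_succ_of_le (hwt i _ (hu i)))
    · exact Finset.mem_powersetCard.2
        ⟨Finset.subset_compl_iff_disjoint_right.2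
          (Finset.disjoint_iff_inter_eq_empty.2 (hus i)), rfl⟩
  have hinj : Function.Injective fun i => supp (u i) := by
    intro i j hij
    by_contra hne
    have huij : u i = u j := by
      funext x
      have hx := Finset.ext_iff.1 hij x
      simp only [supp, Finset.mem_filter, Finset.mem_univ, true_and] at hx
      exact Bool.eq_iff_iff.2 hx
    exact Set.disjoint_left.1 (hdisj hne) (hu i) (huij ▸ hu j)
  calc M = (Finset.univ : Finset (Fin M)).card := by simp
    _ ≤ T.card := Finset.card_le_card_of_injOn _ hmaps hinj.injOn
    _ ≤ ∑ i ∈ Finset.range (w + 1), (Finset.powersetCard i Sᶜ).card :=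
        Finset.card_biUnion_le
    _ = ∑ i ∈ Finset.range (w + 1), (n - t).choose i := by
        simp [Finset.card_powersetCard, Finset.card_compl, hS]
end

section
/- Let n, t, w be positive integers with t + w ≤ n. If {C_1, …, C_M} is an (n,t,w)-CPC code of size M, then M ≤ binom(n−t, w). -/
/-- An `(n,t,w)`-constant-power cooling (CPC) code: a family of pairwise disjoint codesets of
binary words of weight exactly `w`, such that for every set `S` of `t` coordinates and
every codeset there is a codeword in the codeset whose support avoids `S`. -/
def IsCPCCode {X : Type*} [Fintype X] [DecidableEq X] {ι : Type*} (t w : ℕ)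
    (C : ι → Set (X → Bool)) : Prop :=
  (∀ i, ∀ u ∈ C i, wt u = w) ∧
  (Pairwise fun i j => Disjoint (C i) (C j)) ∧
  (∀ S : Finset X, S.card = t → ∀ i, ∃ u ∈ C i, supp u ∩ S = ∅)

/-- If `{C_1, …, C_M}` is an `(n,t,w)`-CPC code of size `M`, then `M ≤ binom(n−t, w)`. -/
theorem cpc_upper_bound (n t w M : ℕ) (hn : 0 < n) (ht : 0 < t) (hw : 0 < w)
    (htw : t + w ≤ n) (C : Fin M → Set (Fin n → Bool)) (hC : IsCPCCode t w C) :
    M ≤ (n - t).choose w := by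
  obtain ⟨hwt, hdisj, hcool⟩ := hC
  obtain ⟨S, -, hS⟩ := Finset.exists_subset_card_eq (s := (Finset.univ : Finset (Fin n))) (n := t)
    (by rw [Finset.card_univ, Fintype.card_fin]; omega)
  choose f hfC hfS using hcool S hS
  have hinj : Function.Injective fun i => supp (f i) := by
    intro i j hij
    -- A binary word is determined by its support.
    have hf : f i = f j := by
      funext x
      have hx := Finset.ext_iff.mp hij x
      simpa [supp, ← Bool.eq_iff_iff] using hx
    by_contra hne
    exact Set.disjoint_left.mp (hdisj hne) (hfC i) (hf ▸ hfC j)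
  have hmem : ∀ i ∈ (Finset.univ : Finset (Fin M)), supp (f i) ∈ Finset.powersetCard w Sᶜ := by
    intro i _
    rw [Finset.mem_powersetCard, Finset.subset_compl_iff_disjoint_right,
      Finset.disjoint_iff_inter_eq_empty]
    exact ⟨hfS i, hwt i _ (hfC i)⟩
  have hcard := Finset.card_le_card_of_injOn _ hmem hinj.injOn
  simpa [Finset.card_compl, hS] using hcard
end

section
/- Let n, t, w be positive integers with t + w ≤ n. If {C_1, …, C_M} is an (n,t,w)-CPC code of size M, then M·(t+1) ≤ (n−w+1)·binom(n−t−1, w−1), i.e., M ≤ ((n−w+1)/(t+1))·binom(n−t−1, w−1). -/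
namespace CPCTuran

open Finset

variable {α : Type*} [Fintype α] [DecidableEq α]

/-- A set is independent for the family `F` if it contains no member of `F`. -/
def Indep (F : Finset (Finset α)) (A : Finset α) : Prop := ∀ e ∈ F, ¬ e ⊆ A

instance (F : Finset (Finset α)) (A : Finset α) : Decidable (Indep F A) := by
  unfold Indep; infer_instance

/-- The independent sets of size `m`. -/
def indepSets (F : Finset (Finset α)) (m : ℕ) : Finset (Finset α) :=
  (powersetCard m univ).filter (Indep F)

/-- The points outside `A` that keep `A` independent when added to it. -/
def goodExt (F : Finset (Finset α)) (A : Finset α) : Finset α :=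
  univ.filter fun x => x ∉ A ∧ Indep F (insert x A)

/-- The points outside `A` that make `A` dependent when added to it. -/
def badExt (F : Finset (Finset α)) (A : Finset α) : Finset α :=
  univ.filter fun x => x ∉ A ∧ ¬ Indep F (insert x A)

variable {F : Finset (Finset α)} {A B : Finset α} {m r : ℕ} {x : α}

lemma mem_indepSets : A ∈ indepSets F m ↔ A.card = m ∧ Indep F A := by
  simp [indepSets, mem_powersetCard]

lemma mem_goodExt : x ∈ goodExt F A ↔ x ∉ A ∧ Indep F (insert x A) := by simp [goodExt]

lemma mem_badExt : x ∈ badExt F A ↔ x ∉ A ∧ ¬ Indep F (insert x A) := by simp [badExt]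

lemma Indep.mono {β : Type*} {F : Finset (Finset β)} {A B : Finset β} (h : Indep F B)
    (hAB : A ⊆ B) : Indep F A :=
  fun e he hA => h e he (hA.trans hAB)

lemma card_goodExt_add_card_badExt (F : Finset (Finset α)) (A : Finset α) :
    (goodExt F A).card + (badExt F A).card = Fintype.card α - A.card := by
  rw [← card_compl, ← card_filter_add_card_filter_not (s := Aᶜ) fun x => Indep F (insert x A)]
  congr 2 <;> ext x <;> simp [mem_goodExt, mem_badExt]

lemma sum_goodExt_le (F : Finset (Finset α)) (m : ℕ) :
    ∑ A ∈ indepSets F m, (goodExt F A).card ≤ (m + 1) * (indepSets F (m + 1)).card := by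
  have h : (m + 1) * (indepSets F (m + 1)).card = ∑ B ∈ indepSets F (m + 1), B.card := by
    rw [sum_congr rfl fun B hB => (mem_indepSets.1 hB).1, sum_const, smul_eq_mul, mul_comm]
  rw [h, ← card_sigma, ← card_sigma _ fun B : Finset α => B]
  refine card_le_card_of_injOn (fun p => ⟨insert p.2 p.1, p.2⟩) ?_ ?_
  · rintro ⟨A, x⟩ hp
    simp only [coe_sigma, Set.mem_sigma_iff, mem_coe, mem_indepSets, mem_goodExt] at hp ⊢
    obtain ⟨⟨hc, -⟩, hx, hi⟩ := hp
    exact ⟨⟨by rw [card_insert_of_notMem hx, hc], hi⟩, mem_insert_self _ _⟩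
  · rintro ⟨A, x⟩ hp ⟨B, y⟩ hq h
    simp only [coe_sigma, Set.mem_sigma_iff, mem_coe, mem_goodExt] at hp hq
    simp only [Sigma.mk.injEq, heq_eq_eq] at h ⊢
    obtain ⟨h, rfl⟩ := h
    exact ⟨by rw [← erase_insert hp.2.1, h, erase_insert hq.2.1], rfl⟩

/-- The base case: a bad extension of an independent set one point smaller than the members of `F`
is a member of `F` with a marked point. -/
lemma sum_badExt_base (hF : ∀ e ∈ F, e.card = m + 1) :
    ∑ A ∈ indepSets F m, (badExt F A).card ≤ (m + 1) * F.card := by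
  have h : (m + 1) * F.card = ∑ B ∈ F, B.card := by
    rw [sum_congr rfl hF, sum_const, smul_eq_mul, mul_comm]
  rw [h, ← card_sigma, ← card_sigma _ fun B : Finset α => B]
  refine card_le_card_of_injOn (fun p => ⟨insert p.2 p.1, p.2⟩) ?_ ?_
  · rintro ⟨A, x⟩ hp
    simp only [coe_sigma, Set.mem_sigma_iff, mem_coe, mem_indepSets, mem_badExt] at hp ⊢
    obtain ⟨⟨hc, -⟩, hx, hi⟩ := hp
    refine ⟨?_, mem_insert_self _ _⟩
    simp only [Indep, not_forall, not_not] at hi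
    obtain ⟨e, he, hs⟩ := hi
    rwa [← eq_of_subset_of_card_le hs (by rw [card_insert_of_notMem hx, hc, hF e he])]
  · rintro ⟨A, x⟩ hp ⟨B, y⟩ hq h
    simp only [coe_sigma, Set.mem_sigma_iff, mem_coe, mem_badExt] at hp hq
    simp only [Sigma.mk.injEq, heq_eq_eq] at h ⊢
    obtain ⟨h, rfl⟩ := h
    exact ⟨by rw [← erase_insert hp.2.1, h, erase_insert hq.2.1], rfl⟩

/-- At least `|B| + 1 - r` points of an independent set `B` can be removed without repairing a bad
extension `y`: all those outside the member of `F` that `y` creates. -/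
lemma le_card_removable (hF : ∀ e ∈ F, e.card = r) (hB : Indep F B) {y : α}
    (hy : y ∈ badExt F B) :
    B.card + 1 - r ≤ (B.filter fun z => ¬ Indep F (insert y (B.erase z))).card := by
  obtain ⟨hyB, hi⟩ := mem_badExt.1 hy
  simp only [Indep, not_forall, not_not] at hi
  obtain ⟨e, he, hs⟩ := hi
  have hye : y ∈ e := by
    by_contra hye
    exact hB e he ((subset_insert_iff_of_notMem hye).1 hs)
  calc B.card + 1 - r = (insert y B \ e).card := by
        rw [card_sdiff_of_subset hs, card_insert_of_notMem hyB, hF e he]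
    _ ≤ _ := by
        refine card_le_card fun z hz => ?_
        obtain ⟨hz, hze⟩ := mem_sdiff.1 hz
        have hzy : z ≠ y := fun h => hze (h ▸ hye)
        refine mem_filter.2 ⟨mem_of_mem_insert_of_ne hz hzy, fun h => h e he fun a ha => ?_⟩
        have haz : a ≠ z := fun h => hze (h ▸ ha)
        have := hs ha
        simp only [mem_insert, mem_erase] at this ⊢
        tauto

/-- Removing a point `z` from an independent set with a surviving bad extension `y` gives an
independent set with the good extension `z` and the bad extension `y`. -/
lemma mul_sum_badExt_succ_le (hF : ∀ e ∈ F, e.card = r) :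
    (m + 2 - r) * ∑ B ∈ indepSets F (m + 1), (badExt F B).card
      ≤ ∑ A ∈ indepSets F m, (goodExt F A).card * (badExt F A).card := by
  calc _ ≤ ∑ B ∈ indepSets F (m + 1), ∑ y ∈ badExt F B,
        (B.filter fun z => ¬ Indep F (insert y (B.erase z))).card := by
        rw [mul_sum]
        refine sum_le_sum fun B hB => ?_
        obtain ⟨hc, hi⟩ := mem_indepSets.1 hB
        rw [mul_comm, ← smul_eq_mul]
        refine card_nsmul_le_sum _ _ _ fun y hy => ?_
        have := le_card_removable hF hi hy
        rwa [hc] at this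
    _ = ((indepSets F (m + 1)).sigma fun B => (badExt F B).sigma fun y =>
          B.filter fun z => ¬ Indep F (insert y (B.erase z))).card := by
        simp only [card_sigma]
    _ ≤ ((indepSets F m).sigma fun A => goodExt F A ×ˢ badExt F A).card := by
        refine card_le_card_of_injOn (fun p => ⟨p.1.erase p.2.2, (p.2.2, p.2.1)⟩) ?_ ?_
        · rintro ⟨B, y, z⟩ hp
          simp only [coe_sigma, Set.mem_sigma_iff, mem_coe, mem_indepSets, mem_badExt,
            mem_filter, mem_product, mem_goodExt] at hp ⊢
          obtain ⟨⟨hc, hi⟩, ⟨hy, -⟩, hz, hd⟩ := hp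
          refine ⟨⟨by rw [card_erase_of_mem hz, hc]; rfl, hi.mono (erase_subset _ _)⟩,
            ⟨notMem_erase _ _, by rwa [insert_erase hz]⟩,
            fun h => hy (mem_of_mem_erase h), hd⟩
        · rintro ⟨B, y, z⟩ hp ⟨B', y', z'⟩ hq h
          simp only [coe_sigma, Set.mem_sigma_iff, mem_coe, mem_filter] at hp hq
          simp only [Sigma.mk.injEq, heq_eq_eq, Prod.mk.injEq] at h ⊢
          obtain ⟨h, rfl, rfl⟩ := h
          exact ⟨by rw [← insert_erase hp.2.2.1, h, insert_erase hq.2.2.1], rfl, rfl⟩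
    _ = _ := by simp only [card_sigma, card_product]

/-- Chebyshev's sum inequality for the oppositely ordered functions `b` and `d`. -/
lemma card_mul_sum_le (F : Finset (Finset α)) (m : ℕ) :
    (indepSets F m).card * ∑ A ∈ indepSets F m, (goodExt F A).card * (badExt F A).card
      ≤ (∑ A ∈ indepSets F m, (goodExt F A).card) * ∑ A ∈ indepSets F m, (badExt F A).card := by
  have h : AntivaryOn (fun A => ((goodExt F A).card : ℤ)) (fun A => ((badExt F A).card : ℤ))
      (indepSets F m : Set (Finset α)) := by
    intro A hA B hB hlt
    have h1 := card_goodExt_add_card_badExt F A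
    have h2 := card_goodExt_add_card_badExt F B
    rw [(mem_indepSets.1 hA).1] at h1
    rw [(mem_indepSets.1 hB).1] at h2
    simp only at hlt ⊢
    omega
  exact_mod_cast h.card_mul_sum_le_sum_mul_sum

lemma sum_badExt_mul_choose_le (hF : ∀ e ∈ F, e.card = r + 1) (hm : r ≤ m) :
    (∑ A ∈ indepSets F m, (badExt F A).card) * (Fintype.card α).choose r
      ≤ (r + 1) * F.card * m.choose r * (indepSets F m).card := by
  induction m, hm using Nat.le_induction with
  | base =>
    have hI : indepSets F r = powersetCard r univ := by
      refine filter_true_of_mem fun A hA e he hs => ?_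
      have := card_le_card hs
      rw [hF e he, (mem_powersetCard.1 hA).2] at this
      omega
    rw [Nat.choose_self, mul_one]
    conv_rhs => rw [hI, card_powersetCard, card_univ]
    exact Nat.mul_le_mul_right _ (sum_badExt_base hF)
  | succ m hm ih =>
    rcases (indepSets F m).eq_empty_or_nonempty with h0 | h0
    · have h1 : indepSets F (m + 1) = ∅ := by
        refine eq_empty_of_forall_notMem fun B hB => ?_
        obtain ⟨hc, hi⟩ := mem_indepSets.1 hB
        obtain ⟨A, hA, hAc⟩ := exists_subset_card_eq (show m ≤ B.card by omega)
        have : A ∈ indepSets F m := mem_indepSets.2 ⟨hAc, hi.mono hA⟩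
        simp [h0] at this
      simp [h1]
    · have hstep := mul_sum_badExt_succ_le (m := m) hF
      have hcheb := card_mul_sum_le F m
      have hgood := sum_goodExt_le F m
      have hs : m + 2 - (r + 1) = m + 1 - r := by omega
      rw [hs] at hstep
      have hch : (m + 1) * m.choose r = (m + 1).choose r * (m + 1 - r) := by
        rw [mul_comm]; exact Nat.choose_mul_succ_eq m r
      have hpos : 0 < (indepSets F m).card * (m + 1 - r) :=
        Nat.mul_pos h0.card_pos (by omega)
      refine Nat.le_of_mul_le_mul_left ?_ hpos
      set D := ∑ A ∈ indepSets F m, (badExt F A).card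
      set D' := ∑ A ∈ indepSets F (m + 1), (badExt F A).card
      set G := ∑ A ∈ indepSets F m, (goodExt F A).card
      set N := (indepSets F m).card
      set N' := (indepSets F (m + 1)).card
      set c := (Fintype.card α).choose r
      calc N * (m + 1 - r) * (D' * c) = N * ((m + 1 - r) * D') * c := by ring
        _ ≤ G * D * c := Nat.mul_le_mul_right _ ((Nat.mul_le_mul_left _ hstep).trans hcheb)
        _ ≤ (m + 1) * N' * D * c := by gcongr
        _ = (m + 1) * N' * (D * c) := by ring
        _ ≤ (m + 1) * N' * ((r + 1) * F.card * m.choose r * N) := by gcongr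
        _ = (r + 1) * F.card * N * N' * ((m + 1) * m.choose r) := by ring
        _ = N * (m + 1 - r) * ((r + 1) * F.card * (m + 1).choose r * N') := by rw [hch]; ring

/-- De Caen's bound for a family of `(r + 1)`-sets such that every `k`-set contains a member. -/
lemma deCaen_bound (hF : ∀ e ∈ F, e.card = r + 1) {k : ℕ} (hr : r < k)
    (hk : k ≤ Fintype.card α) (hT : ∀ A : Finset α, A.card = k → ∃ e ∈ F, e ⊆ A) :
    (Fintype.card α - k + 1) * (Fintype.card α).choose r
      ≤ (r + 1) * F.card * (k - 1).choose r := by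
  have hk0 : indepSets F k = ∅ := by
    refine eq_empty_of_forall_notMem fun A hA => ?_
    obtain ⟨hc, hi⟩ := mem_indepSets.1 hA
    obtain ⟨e, he, hs⟩ := hT A hc
    exact hi e he hs
  have hex : ∃ m, indepSets F m = ∅ := ⟨k, hk0⟩
  -- `m + 1` will be the least size without independent sets
  have hkmin : Nat.find hex ≤ k := Nat.find_min' hex hk0
  have hrmin : r < Nat.find hex := by
    by_contra! hle
    obtain ⟨A, -, hA⟩ := exists_subset_card_eq
      (show Nat.find hex ≤ (univ : Finset α).card by rw [card_univ]; omega)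
    have : A ∈ indepSets F (Nat.find hex) := by
      refine mem_indepSets.2 ⟨hA, fun e he hs => ?_⟩
      have := card_le_card hs
      rw [hF e he] at this
      omega
    simp [Nat.find_spec hex] at this
  obtain ⟨m, hm⟩ : ∃ m, Nat.find hex = m + 1 := ⟨Nat.find hex - 1, by omega⟩
  have hm1 : indepSets F (m + 1) = ∅ := hm ▸ Nat.find_spec hex
  have hm0 : (indepSets F m).Nonempty :=
    nonempty_iff_ne_empty.2 (Nat.find_min hex (by omega))
  have hD : ∑ A ∈ indepSets F m, (badExt F A).card
      = (indepSets F m).card * (Fintype.card α - m) := by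
    rw [← smul_eq_mul, ← sum_const]
    refine sum_congr rfl fun A hA => ?_
    obtain ⟨hc, -⟩ := mem_indepSets.1 hA
    have hg : goodExt F A = ∅ := by
      refine eq_empty_of_forall_notMem fun x hx => ?_
      obtain ⟨hx, hi⟩ := mem_goodExt.1 hx
      have : insert x A ∈ indepSets F (m + 1) :=
        mem_indepSets.2 ⟨by rw [card_insert_of_notMem hx, hc], hi⟩
      simp [hm1] at this
    have := card_goodExt_add_card_badExt F A
    simpa [hg, hc] using this
  have hmain := sum_badExt_mul_choose_le hF (show r ≤ m by omega)
  rw [hD] at hmain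
  have hmain' : (Fintype.card α - m) * (Fintype.card α).choose r
      ≤ (r + 1) * F.card * m.choose r := by
    refine Nat.le_of_mul_le_mul_left ?_ hm0.card_pos
    linarith
  calc _ ≤ (Fintype.card α - m) * (Fintype.card α).choose r := by gcongr; omega
    _ ≤ _ := hmain'
    _ ≤ _ := by gcongr; omega

end CPCTuran

/-- If `{C_1, …, C_M}` is an `(n,t,w)`-CPC code of size `M`, then
`M·(t+1) ≤ (n−w+1)·binom(n−t−1, w−1)`. -/
theorem cpc_turan_upper_bound (n t w M : ℕ) (hn : 0 < n) (ht : 0 < t) (hw : 0 < w)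
    (htw : t + w ≤ n) (C : Fin M → Set (Fin n → Bool)) (hC : IsCPCCode t w C) :
    M * (t + 1) ≤ (n - w + 1) * (n - t - 1).choose (w - 1) := by
  classical
  obtain ⟨hwt, hdisj, hcool⟩ := hC
  obtain ⟨r, rfl⟩ : ∃ r, w = r + 1 := ⟨w - 1, by omega⟩
  have hinj : Function.Injective (supp : (Fin n → Bool) → Finset (Fin n)) := by
    intro u v h
    funext x
    have := congrArg (x ∈ ·) h
    simp only [supp, Finset.mem_filter, Finset.mem_univ, true_and, eq_iff_iff] at this
    exact Bool.eq_iff_iff.2 this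
  let F : Fin M → Finset (Finset (Fin n)) := fun i => (C i).toFinset.image supp
  have hF : ∀ i, ∀ e ∈ F i, e.card = r + 1 := by
    intro i e he
    simp only [F, Finset.mem_image, Set.mem_toFinset] at he
    obtain ⟨u, hu, rfl⟩ := he
    exact hwt i u hu
  have hbound : ∀ i, (t + 1) * n.choose r ≤ (r + 1) * (F i).card * (n - t - 1).choose r := by
    intro i
    have := CPCTuran.deCaen_bound (hF i) (k := n - t) (by omega) (by simp) (fun A hA => by
      obtain ⟨u, hu, hd⟩ := hcool Aᶜ (by rw [Finset.card_compl, hA, Fintype.card_fin]; omega) i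
      refine ⟨supp u, Finset.mem_image_of_mem _ (Set.mem_toFinset.2 hu), ?_⟩
      rw [← Finset.disjoint_iff_inter_eq_empty] at hd
      simpa using Finset.subset_compl_iff_disjoint_right.2 hd)
    rw [Fintype.card_fin] at this
    rwa [show n - (n - t) = t by omega] at this
  have hsum : ∑ i, (F i).card ≤ n.choose (r + 1) := by
    rw [← Finset.card_biUnion]
    · refine (Finset.card_le_card (t := Finset.powersetCard (r + 1) Finset.univ) ?_).trans
        (by simp)
      intro e he
      obtain ⟨i, -, hi⟩ := Finset.mem_biUnion.1 he
      exact Finset.mem_powersetCard.2 ⟨Finset.subset_univ _, hF i e hi⟩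
    · intro i _ j _ hij
      refine (Finset.disjoint_image hinj).2 ?_
      exact Set.disjoint_toFinset.2 (hdisj hij)
  have hpos : 0 < n.choose r := Nat.choose_pos (by omega)
  refine Nat.le_of_mul_le_mul_right ?_ hpos
  have hch : n.choose (r + 1) * (r + 1) = n.choose r * (n - r) := Nat.choose_succ_right_eq n r
  calc M * (t + 1) * n.choose r = ∑ _i : Fin M, (t + 1) * n.choose r := by
        simp [mul_assoc]
    _ ≤ ∑ i, (r + 1) * (F i).card * (n - t - 1).choose r :=
        Finset.sum_le_sum fun i _ => hbound i
    _ = (r + 1) * (∑ i, (F i).card) * (n - t - 1).choose r := by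
        rw [Finset.mul_sum, Finset.sum_mul]
    _ ≤ (r + 1) * n.choose (r + 1) * (n - t - 1).choose r := by gcongr
    _ = (n - (r + 1) + 1) * (n - t - 1).choose (r + 1 - 1) * n.choose r := by
        rw [mul_comm (r + 1), hch, show n - (r + 1) + 1 = n - r by omega, Nat.add_sub_cancel]
        ring
end

section
/- Let n, t, w be positive integers with t + w ≤ n. If {C_1, …, C_M} is an (n,t,w)-LPC code of size M, then M ≤ ∑_{i=0}^{w−1} binom(n, i) + ((n−w+1)/(t+1))·binom(n−t−1, w−1), where the last term is a rational number. -/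
namespace LPC

open Finset

variable {α : Type*} [Fintype α] [DecidableEq α]

/-! ### Independent sets and blocked points -/

/-- `S` is independent in `H`: it contains no member of `H`. -/
def Indep (H : Finset (Finset α)) (S : Finset α) : Prop := ∀ E ∈ H, ¬ E ⊆ S

instance (H : Finset (Finset α)) (S : Finset α) : Decidable (Indep H S) := by
  unfold Indep; infer_instance

/-- The independent sets of size `j`. -/
def ind (H : Finset (Finset α)) (j : ℕ) : Finset (Finset α) :=
  univ.filter fun S => S.card = j ∧ Indep H S

/-- The points outside `S` whose addition to `S` gives an independent set. -/
def free (H : Finset (Finset α)) (S : Finset α) : Finset α :=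
  univ.filter fun x => x ∉ S ∧ Indep H (insert x S)

/-- The points outside `S` whose addition to `S` gives a dependent set. -/
def blocked (H : Finset (Finset α)) (S : Finset α) : Finset α :=
  univ.filter fun x => x ∉ S ∧ ¬ Indep H (insert x S)

lemma Indep.mono {β : Type*} {H : Finset (Finset β)} {S T : Finset β} (h : Indep H T) (hST : S ⊆ T) :
    Indep H S := fun E hE hES => h E hE (hES.trans hST)

lemma card_free_add_card_blocked (H : Finset (Finset α)) (S : Finset α) :
    (free H S).card + (blocked H S).card + S.card = Fintype.card α := by
  have h1 : free H S = Sᶜ.filter (fun x => Indep H (insert x S)) := by ext; simp [free]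
  have h2 : blocked H S = Sᶜ.filter (fun x => ¬ Indep H (insert x S)) := by ext; simp [blocked]
  rw [h1, h2, card_filter_add_card_filter_not, card_compl_add_card]

lemma sum_card_free (H : Finset (Finset α)) (j : ℕ) :
    ∑ A ∈ ind H j, (free H A).card = (j + 1) * (ind H (j + 1)).card := by
  have h : ∑ S ∈ ind H (j + 1), S.card = (j + 1) * (ind H (j + 1)).card := by
    rw [sum_congr rfl (g := fun _ => j + 1), sum_const, smul_eq_mul, mul_comm]
    intro S hS
    simp only [ind, mem_filter] at hS
    exact hS.2.1
  rw [← h, ← card_sigma, ← card_sigma]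
  refine card_nbij' (fun p => ⟨insert p.2 p.1, p.2⟩) (fun p => ⟨p.1.erase p.2, p.2⟩) ?_ ?_ ?_ ?_
  · rintro ⟨A, x⟩ h
    simp only [ind, free, coe_sigma, Set.mem_sigma_iff, mem_coe, mem_filter, mem_univ,
      true_and] at h ⊢
    exact ⟨⟨by rw [card_insert_of_notMem h.2.1, h.1.1], h.2.2⟩, mem_insert_self _ _⟩
  · rintro ⟨S, x⟩ h
    simp only [ind, free, coe_sigma, Set.mem_sigma_iff, mem_coe, mem_filter, mem_univ,
      true_and] at h ⊢
    refine ⟨⟨by rw [card_erase_of_mem h.2, h.1.1]; rfl, h.1.2.mono (erase_subset _ _)⟩,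
      notMem_erase _ _, ?_⟩
    rw [insert_erase h.2]
    exact h.1.2
  · rintro ⟨A, x⟩ h
    simp only [ind, free, coe_sigma, Set.mem_sigma_iff, mem_coe, mem_filter, mem_univ,
      true_and] at h
    simp [erase_insert h.2.1]
  · rintro ⟨S, x⟩ h
    simp only [coe_sigma, Set.mem_sigma_iff, mem_coe] at h
    simp [insert_erase h.2]

/-- If `x` is blocked for an independent set `S`, a member `E` of `H` lies in `insert x S` and
contains `x`; then `x` remains blocked after removing from `S` any of the `|S| - s` points
outside `E`. -/
lemma le_card_blocked_erase {H : Finset (Finset α)} {s : ℕ} (hH : ∀ E ∈ H, E.card = s + 1)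
    {S : Finset α} (hS : Indep H S) {x : α} (hx : x ∈ blocked H S) :
    S.card - s ≤ (S.filter fun y => x ∈ blocked H (S.erase y)).card := by
  simp only [blocked, mem_filter, mem_univ, true_and] at hx
  obtain ⟨hxS, hdep⟩ := hx
  simp only [Indep, not_forall, not_not] at hdep
  obtain ⟨E, hE, hES⟩ := hdep
  have hxE : x ∈ E := by
    by_contra hxE
    exact hS E hE ((subset_insert_iff_of_notMem hxE).1 hES)
  have h1 : S.card - s ≤ (S \ E.erase x).card := by
    have h := le_card_sdiff (E.erase x) S
    rwa [card_erase_of_mem hxE, hH E hE] at h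
  refine h1.trans (card_le_card ?_)
  intro y hy
  simp only [mem_sdiff, mem_erase, not_and] at hy
  simp only [blocked, mem_filter, mem_univ, true_and]
  refine ⟨hy.1, fun h => hxS (mem_of_mem_erase h), fun h => h E hE ?_⟩
  intro z hz
  by_cases hzx : z = x
  · simp [hzx]
  · have hzS : z ∈ S := by simpa [hzx] using hES hz
    have hzy : z ≠ y := by
      rintro rfl
      exact hy.2 hzx hz
    simp [hzx, hzS, hzy]

lemma mul_sum_blocked_le {H : Finset (Finset α)} {s : ℕ} (hH : ∀ E ∈ H, E.card = s + 1) (j : ℕ) :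
    (j + 1 - s) * ∑ S ∈ ind H (j + 1), (blocked H S).card ≤
      ∑ A ∈ ind H j, (free H A).card * (blocked H A).card := by
  calc (j + 1 - s) * ∑ S ∈ ind H (j + 1), (blocked H S).card
      ≤ ∑ S ∈ ind H (j + 1), ∑ x ∈ blocked H S,
          (S.filter fun y => x ∈ blocked H (S.erase y)).card := by
        rw [mul_sum]
        refine sum_le_sum fun S hS => ?_
        simp only [ind, mem_filter, mem_univ, true_and] at hS
        rw [mul_comm, ← smul_eq_mul]
        refine card_nsmul_le_sum _ _ _ fun x hx => ?_
        have h := le_card_blocked_erase hH hS.2 hx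
        rwa [hS.1] at h
    _ = ((ind H (j + 1)).sigma fun S => (blocked H S).sigma fun x =>
          S.filter fun y => x ∈ blocked H (S.erase y)).card := by
        simp only [card_sigma]
    _ ≤ ((ind H j).sigma fun A => free H A ×ˢ blocked H A).card := by
        refine card_le_card_of_injOn (fun p => ⟨p.1.erase p.2.2, (p.2.2, p.2.1)⟩) ?_ ?_
        · rintro ⟨S, x, y⟩ h
          simp only [coe_sigma, Set.mem_sigma_iff, mem_coe, mem_filter, mem_product]
            at h ⊢
          obtain ⟨hS, hx, hy, hxy⟩ := h
          simp only [ind, free, mem_filter, mem_univ, true_and] at hS ⊢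
          refine ⟨⟨by rw [card_erase_of_mem hy, hS.1]; rfl, hS.2.mono (erase_subset _ _)⟩,
            ⟨notMem_erase _ _, ?_⟩, hxy⟩
          rw [insert_erase hy]
          exact hS.2
        · rintro ⟨S, x, y⟩ h ⟨S', x', y'⟩ h' heq
          simp only [coe_sigma, Set.mem_sigma_iff, mem_coe, mem_filter] at h h'
          simp only [Sigma.mk.injEq, heq_eq_eq, Prod.mk.injEq] at heq
          obtain ⟨h1, rfl, rfl⟩ := heq
          have : S = S' := by rw [← insert_erase h.2.2.1, h1, insert_erase h'.2.2.1]
          subst this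
          rfl
    _ = ∑ A ∈ ind H j, (free H A).card * (blocked H A).card := by
        simp only [card_sigma, card_product]

/-- The Moon–Moser type inequality behind de Caen's bound. -/
lemma blocked_step {H : Finset (Finset α)} {s : ℕ} (hH : ∀ E ∈ H, E.card = s + 1) (j : ℕ) :
    (ind H j).card * ((j + 1 - s) * ∑ S ∈ ind H (j + 1), (blocked H S).card) ≤
      (j + 1) * (ind H (j + 1)).card * ∑ A ∈ ind H j, (blocked H A).card := by
  have hanti : AntivaryOn (fun A => ((free H A).card : ℤ)) (fun A => ((blocked H A).card : ℤ))
      (ind H j : Set (Finset α)) := by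
    intro A hA B hB hlt
    simp only [ind, coe_filter, mem_univ, true_and, Set.mem_ofPred_eq] at hA hB
    have h1 := card_free_add_card_blocked H A
    have h2 := card_free_add_card_blocked H B
    have h3 := hA.1
    have h4 := hB.1
    simp only [Nat.cast_lt, Nat.cast_le] at hlt ⊢
    omega
  have hcheb := hanti.card_mul_sum_le_sum_mul_sum
  have hcheb' : (ind H j).card * ∑ A ∈ ind H j, (free H A).card * (blocked H A).card ≤
      (∑ A ∈ ind H j, (free H A).card) * ∑ A ∈ ind H j, (blocked H A).card := by
    exact_mod_cast hcheb
  rw [sum_card_free] at hcheb'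
  exact (Nat.mul_le_mul_left _ (mul_sum_blocked_le hH j)).trans hcheb'

/-- The average number of blocked points grows at most like `binom(j, s)`. -/
lemma blocked_chain {H : Finset (Finset α)} {s : ℕ} (hH : ∀ E ∈ H, E.card = s + 1) (j : ℕ)
    (hj : s ≤ j) :
    (ind H s).card * ∑ S ∈ ind H j, (blocked H S).card ≤
      j.choose s * (ind H j).card * ∑ A ∈ ind H s, (blocked H A).card := by
  induction j, hj using Nat.le_induction with
  | base => simp
  | succ j hj ih =>
    have hstep := blocked_step hH j
    have hch : (j + 1) * j.choose s = (j + 1).choose s * (j + 1 - s) := by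
      rw [mul_comm, Nat.choose_mul_succ_eq]
    rcases Nat.eq_zero_or_pos (ind H j).card with h0 | hpos
    · have h1 := sum_card_free H j
      rw [card_eq_zero.1 h0, sum_empty] at h1
      have h2 : ind H (j + 1) = ∅ := by
        rcases Nat.mul_eq_zero.1 h1.symm with h | h
        · omega
        · exact card_eq_zero.1 h
      simp [h2]
    · have hpos' : 0 < (ind H j).card * (j + 1 - s) := Nat.mul_pos hpos (by omega)
      refine Nat.le_of_mul_le_mul_left ?_ hpos'
      generalize (∑ S ∈ ind H (j + 1), (blocked H S).card) = D' at *
      generalize (∑ S ∈ ind H j, (blocked H S).card) = D at *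
      generalize (∑ S ∈ ind H s, (blocked H S).card) = Ds at *
      generalize (ind H j).card = N at *
      generalize (ind H (j + 1)).card = N' at *
      generalize (ind H s).card = Ns at *
      generalize j + 1 - s = c at *
      calc N * c * (Ns * D') = Ns * (N * (c * D')) := by ring
        _ ≤ Ns * ((j + 1) * N' * D) := Nat.mul_le_mul_left _ hstep
        _ = (j + 1) * N' * (Ns * D) := by ring
        _ ≤ (j + 1) * N' * (j.choose s * N * Ds) := Nat.mul_le_mul_left _ ih
        _ = ((j + 1) * j.choose s) * (N' * N * Ds) := by ring
        _ = N * c * ((j + 1).choose s * N' * Ds) := by rw [hch]; ring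

lemma sum_blocked_le {H : Finset (Finset α)} {s : ℕ} (hH : ∀ E ∈ H, E.card = s + 1) :
    ∑ A ∈ ind H s, (blocked H A).card ≤ (s + 1) * H.card := by
  have h : ∑ E ∈ H, E.card = (s + 1) * H.card := by
    rw [sum_congr rfl hH, sum_const, smul_eq_mul, mul_comm]
  rw [← h, ← card_sigma, ← card_sigma]
  refine card_le_card_of_injOn (fun p => ⟨insert p.2 p.1, p.2⟩) ?_ ?_
  · rintro ⟨A, x⟩ h
    simp only [ind, blocked, coe_sigma, Set.mem_sigma_iff, mem_coe, mem_filter, mem_univ,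
      true_and] at h ⊢
    obtain ⟨⟨hA, -⟩, hxA, hdep⟩ := h
    simp only [Indep, not_forall, not_not] at hdep
    obtain ⟨E, hE, hES⟩ := hdep
    have : E = insert x A :=
      eq_of_subset_of_card_le hES (by rw [card_insert_of_notMem hxA, hA, hH E hE])
    exact ⟨this ▸ hE, mem_insert_self _ _⟩
  · rintro ⟨A, x⟩ h ⟨A', x'⟩ h' heq
    simp only [ind, blocked, coe_sigma, Set.mem_sigma_iff, mem_coe, mem_filter, mem_univ,
      true_and] at h h'
    simp only [Sigma.mk.injEq, heq_eq_eq] at heq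
    obtain ⟨h1, rfl⟩ := heq
    have : A = A' := by rw [← erase_insert h.2.1, h1, erase_insert h'.2.1]
    subst this
    rfl

lemma card_ind_self {H : Finset (Finset α)} {s : ℕ} (hH : ∀ E ∈ H, E.card = s + 1) :
    (ind H s).card = (Fintype.card α).choose s := by
  have : ind H s = powersetCard s univ := by
    ext S
    simp only [ind, mem_filter, mem_univ, true_and, mem_powersetCard, subset_univ,
      and_iff_left_iff_imp]
    intro hS E hE hES
    have h1 := card_le_card hES
    have h2 := hH E hE
    omega
  rw [this, card_powersetCard, card_univ]

/-! ### De Caen's bound -/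

/-- De Caen's bound: if every `k`-set contains a member of the `(s+1)`-uniform family `H`, with
`s < k ≤ n`, then `(n-k+1) * binom(n, s) ≤ binom(k-1, s) * (s+1) * |H|`. Here `k = q + 1`. -/
lemma deCaen {H : Finset (Finset α)} {s q : ℕ} (hH : ∀ E ∈ H, E.card = s + 1)
    (hsq : s ≤ q) (hq : q ≤ Fintype.card α)
    (hT : ∀ S : Finset α, S.card = q + 1 → ¬ Indep H S) :
    (Fintype.card α - q) * (Fintype.card α).choose s ≤ q.choose s * ((s + 1) * H.card) := by
  have hNs : 0 < (ind H s).card := by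
    rw [card_ind_self hH]
    exact Nat.choose_pos (hsq.trans hq)
  -- `m` is the size of a largest independent set.
  set m := Nat.findGreatest (fun j => 0 < (ind H j).card) q with hm
  have hmpos : 0 < (ind H m).card := Nat.findGreatest_spec (P := fun j => 0 < (ind H j).card) hsq hNs
  have hsm : s ≤ m := Nat.le_findGreatest hsq hNs
  have hmq : m ≤ q := Nat.findGreatest_le q
  have hnext : ind H (m + 1) = ∅ := by
    rcases hmq.eq_or_lt with h | h
    · refine eq_empty_of_forall_notMem fun S hS => ?_
      simp only [ind, mem_filter, mem_univ, true_and] at hS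
      exact hT S (by rw [hS.1, h]) hS.2
    · have := Nat.findGreatest_is_greatest (P := fun j => 0 < (ind H j).card) (n := q)
        (k := m + 1) (by omega) (by omega)
      rw [← card_eq_zero]
      omega
  have hfree := sum_card_free H m
  rw [hnext, card_empty, mul_zero, sum_eq_zero_iff] at hfree
  have hblocked : ∑ S ∈ ind H m, (blocked H S).card = (ind H m).card * (Fintype.card α - m) := by
    rw [← smul_eq_mul, ← sum_const]
    refine sum_congr rfl fun S hS => ?_
    have h1 := card_free_add_card_blocked H S
    have h2 := hfree S hS
    simp only [ind, mem_filter, mem_univ, true_and] at hS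
    omega
  have hchain := blocked_chain hH m hsm
  rw [hblocked] at hchain
  have h1 : (ind H s).card * (Fintype.card α - m) ≤
      m.choose s * ∑ A ∈ ind H s, (blocked H A).card := by
    refine Nat.le_of_mul_le_mul_left ?_ hmpos
    calc _ = _ := by ring
      _ ≤ _ := hchain
      _ = _ := by ring
  calc (Fintype.card α - q) * (Fintype.card α).choose s
      ≤ (Fintype.card α - m) * (ind H s).card := by
        rw [card_ind_self hH]
        exact Nat.mul_le_mul_right _ (by omega)
    _ = (ind H s).card * (Fintype.card α - m) := mul_comm _ _
    _ ≤ m.choose s * ∑ A ∈ ind H s, (blocked H A).card := h1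
    _ ≤ q.choose s * ((s + 1) * H.card) :=
        Nat.mul_le_mul (Nat.choose_le_choose s hmq) (sum_blocked_le hH)

/-! ### Codesets as set families -/

open Classical in
/-- The family of supports of the words in a codeset. -/
noncomputable def supports (C : Set (α → Bool)) : Finset (Finset α) :=
  univ.filter fun E => (fun x => decide (x ∈ E)) ∈ C

lemma supp_mem_supports {C : Set (α → Bool)} {u : α → Bool} (hu : u ∈ C) : supp u ∈ supports C := by
  have : (fun x => decide (x ∈ supp u)) = u := by ext x; simp [supp]
  simp only [supports, mem_filter, mem_univ, true_and]
  rwa [this]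

lemma supports_disjoint {C C' : Set (α → Bool)} (h : Disjoint C C') :
    Disjoint (supports C) (supports C') := by
  rw [Finset.disjoint_left]
  intro E hE hE'
  simp only [supports, mem_filter, mem_univ, true_and] at hE hE'
  exact Set.disjoint_left.1 h hE hE'

lemma card_le_of_mem_supports {C : Set (α → Bool)} {w : ℕ} (h : ∀ u ∈ C, wt u ≤ w) {E : Finset α}
    (hE : E ∈ supports C) : E.card ≤ w := by
  simp only [supports, mem_filter, mem_univ, true_and] at hE
  simpa [wt] using h _ hE

end LPC

open LPC Finset in
/-- If `{C_1, …, C_M}` is an `(n,t,w)`-LPC code of size `M`, then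
`M ≤ ∑_{i=0}^{w−1} binom(n, i) + ((n−w+1)/(t+1))·binom(n−t−1, w−1)`,
where the last term is a rational number. -/
theorem lpc_turan_upper_bound (n t w M : ℕ) (hn : 0 < n) (ht : 0 < t) (hw : 0 < w)
    (htw : t + w ≤ n) (C : Fin M → Set (Fin n → Bool)) (hC : IsLPCCode t w C) :
    (M : ℚ) ≤ (∑ i ∈ Finset.range w, (n.choose i : ℚ)) +
      ((n - w + 1 : ℕ) : ℚ) / ((t + 1 : ℕ) : ℚ) * (((n - t - 1).choose (w - 1) : ℕ) : ℚ) := by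
  obtain ⟨hwt, hdisj, hcool⟩ := hC
  obtain ⟨s, rfl⟩ : ∃ s, w = s + 1 := ⟨w - 1, by omega⟩
  simp only [Nat.add_sub_cancel]
  classical
  set L : Finset (Fin M) := univ.filter fun i => ∃ E ∈ supports (C i), E.card < s + 1 with hL
  have hLcard : L.card ≤ ∑ i ∈ range (s + 1), n.choose i := by
    have hch : ∀ i, ∃ E, i ∈ L → E ∈ supports (C i) ∧ E.card < s + 1 := by
      intro i
      by_cases hi : i ∈ L
      · obtain ⟨E, hE⟩ := (mem_filter.1 hi).2
        exact ⟨E, fun _ => hE⟩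
      · exact ⟨∅, fun h => absurd h hi⟩
    choose f hf using hch
    have hle : L.card ≤ ((range (s + 1)).biUnion fun i => powersetCard i (univ : Finset (Fin n))).card := by
      refine card_le_card_of_injOn f ?_ ?_
      · intro i hi
        simpa using (hf i hi).2
      · intro i hi j hj hij
        by_contra hne
        exact Finset.disjoint_left.1 (supports_disjoint (hdisj hne)) (hf i hi).1
          (hij ▸ (hf j hj).1)
    refine hle.trans (card_biUnion_le.trans (le_of_eq ?_))
    simp
  -- Each remaining codeset gives a Turán system.
  have hbound : ∀ i ∈ Lᶜ, (t + 1) * n.choose s ≤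
      (n - t - 1).choose s * ((s + 1) * (supports (C i)).card) := by
    intro i hi
    have hcard : ∀ E ∈ supports (C i), E.card = s + 1 := by
      intro E hE
      have h1 := card_le_of_mem_supports (hwt i) hE
      simp only [hL, mem_compl, mem_filter, mem_univ, true_and, not_exists, not_and, not_lt] at hi
      exact le_antisymm h1 (hi E hE)
    have h := deCaen (q := n - t - 1) hcard (by omega) (by simp; omega) ?_
    · rw [Fintype.card_fin] at h
      rwa [show n - (n - t - 1) = t + 1 by omega] at h
    · intro S hS hind
      obtain ⟨u, hu, hdis⟩ := hcool Sᶜ (by rw [card_compl, hS, Fintype.card_fin]; omega) i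
      refine hind _ (supp_mem_supports hu) ?_
      rwa [← Finset.disjoint_iff_inter_eq_empty, disjoint_compl_right_iff] at hdis
  have hsum : ∑ i ∈ Lᶜ, (supports (C i)).card ≤ n.choose (s + 1) := by
    rw [← card_biUnion fun i _ j _ hij => supports_disjoint (hdisj hij)]
    have : n.choose (s + 1) = (powersetCard (s + 1) (univ : Finset (Fin n))).card := by simp
    rw [this]
    refine card_le_card fun E hE => ?_
    obtain ⟨i, hi, hE⟩ := mem_biUnion.1 hE
    have h1 := card_le_of_mem_supports (hwt i) hE
    simp only [hL, mem_compl, mem_filter, mem_univ, true_and, not_exists, not_and, not_lt] at hi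
    exact mem_powersetCard.2 ⟨subset_univ _, le_antisymm h1 (hi E hE)⟩
  have hR : Lᶜ.card * (t + 1) ≤ (n - (s + 1) + 1) * (n - t - 1).choose s := by
    have hpos : 0 < n.choose s := Nat.choose_pos (by omega)
    refine Nat.le_of_mul_le_mul_right ?_ hpos
    calc Lᶜ.card * (t + 1) * n.choose s = Lᶜ.card • ((t + 1) * n.choose s) := by
          rw [smul_eq_mul, mul_assoc]
      _ ≤ ∑ i ∈ Lᶜ, (n - t - 1).choose s * ((s + 1) * (supports (C i)).card) :=
          card_nsmul_le_sum _ _ _ hbound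
      _ = (n - t - 1).choose s * ((s + 1) * ∑ i ∈ Lᶜ, (supports (C i)).card) := by
          rw [← mul_sum, ← mul_sum]
      _ ≤ (n - t - 1).choose s * ((s + 1) * n.choose (s + 1)) := by gcongr
      _ = (n - t - 1).choose s * (n.choose s * (n - s)) := by
          rw [← Nat.choose_succ_right_eq, mul_comm (s + 1)]
      _ = (n - (s + 1) + 1) * (n - t - 1).choose s * n.choose s := by
          rw [show n - (s + 1) + 1 = n - s by omega]; ring
  have hM : L.card + Lᶜ.card = M := by rw [card_add_card_compl, Fintype.card_fin]
  have hMq : (M : ℚ) = L.card + Lᶜ.card := by exact_mod_cast hM.symm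
  rw [hMq]
  refine add_le_add (by exact_mod_cast hLcard) ?_
  rw [div_mul_eq_mul_div, le_div_iff₀ (by positivity)]
  exact_mod_cast hR
end

section
/- Let t and w be positive integers and let n = (t+1)·w. Then there exists an (n,t,w)-CPC code of size binom(n−1, w−1). -/
open Finset

/-- Rounding a fractional choice. Row `i` has entries `A i j`; entries carry a weight `c / D`
summing to `1` in each row, and the total weight of the entries labelled `a` is the integer `d a`.
Then one entry can be chosen in each row so that the label `a` is chosen exactly `d a` times. -/
lemma exists_exact_choice {I J α : Type*} [Fintype I] [Fintype J] [Fintype α] [DecidableEq α]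
    (A : I → J → α) (c d : α → ℕ) (D : ℕ) (hD : 0 < D)
    (hrow : ∀ i, ∑ j, c (A i j) = D)
    (hcol : ∀ a, #{p : I × J | A p.1 p.2 = a} * c a = D * d a) :
    ∃ f : I → J, ∀ a, #{i | A i (f i) = a} = d a := by
  classical
  have key : ∀ T : Finset α, ∑ p : I × J with A p.1 p.2 ∈ T, c (A p.1 p.2) = D * ∑ a ∈ T, d a := by
    intro T
    rw [Finset.mul_sum, ← Finset.sum_fiberwise_of_maps_to (s := {p : I × J | A p.1 p.2 ∈ T})
      (t := T) (g := fun p => A p.1 p.2) (by simp)]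
    refine Finset.sum_congr rfl fun a ha => ?_
    rw [← hcol a, ← smul_eq_mul, ← Finset.sum_const, Finset.filter_filter]
    refine Finset.sum_congr ?_ ?_
    · ext p
      simp only [mem_filter, mem_univ, true_and]
      exact ⟨fun h => h.2, fun h => ⟨h ▸ ha, h⟩⟩
    · intro p hp
      simp only [mem_filter, mem_univ, true_and] at hp
      rw [hp]
  have htot : Fintype.card I = ∑ a, d a := by
    have h := key univ
    simp only [mem_univ, filter_true] at h
    rw [Fintype.sum_prod_type] at h
    simp only [hrow, sum_const, card_univ, smul_eq_mul] at h
    rw [mul_comm] at h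
    exact Nat.eq_of_mul_eq_mul_left hD h
  -- Each label `a` offers `d a` slots; rows are matched with slots of the labels they contain.
  let N : I → Finset (Σ a, Fin (d a)) := fun i => (univ.image (A i)).sigma fun _ => univ
  have hall : ∀ s : Finset I, #s ≤ #(s.biUnion N) := by
    intro s
    have e : s.biUnion N = (s.biUnion fun i => univ.image (A i)).sigma fun _ => univ := by
      ext ⟨a, k⟩
      simp [N]
    rw [e, card_sigma]
    simp only [card_univ, Fintype.card_fin]
    refine Nat.le_of_mul_le_mul_left ?_ hD
    rw [← key]
    calc D * #s = ∑ i ∈ s, ∑ j, c (A i j) := by simp [hrow, mul_comm]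
      _ = ∑ p ∈ s ×ˢ (univ : Finset J), c (A p.1 p.2) := by rw [sum_product]
      _ ≤ _ := by
        refine sum_le_sum_of_subset fun p hp => ?_
        simp only [mem_product, mem_univ, and_true] at hp
        simp only [mem_filter, mem_univ, true_and, mem_biUnion, mem_image]
        exact ⟨p.1, hp, p.2, rfl⟩
  obtain ⟨h, hinj, hmem⟩ := (Finset.all_card_le_biUnion_card_iff_exists_injective N).1 hall
  have hf : ∀ i, ∃ j, A i j = (h i).1 := by
    intro i
    simpa [N] using hmem i
  choose f hf using hf
  refine ⟨f, ?_⟩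
  have hle : ∀ a, #{i | A i (f i) = a} ≤ d a := by
    intro a
    calc #{i | A i (f i) = a} ≤ #(({a} : Finset α).sigma fun a => (univ : Finset (Fin (d a)))) := by
          refine card_le_card_of_injOn h ?_ hinj.injOn
          intro i hi
          simp only [mem_coe, mem_filter, mem_univ, true_and] at hi
          simp [← hf, hi]
      _ = d a := by simp
  -- The upper bounds add up to the number of rows, so all of them are attained.
  have hsum : ∑ a, #{i | A i (f i) = a} = ∑ a, d a := by
    rw [← htot, ← card_univ]
    exact (card_eq_sum_card_fiberwise (f := fun i => A i (f i)) (t := univ) (by simp)).symm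
  intro a
  exact (Finset.sum_eq_sum_iff_of_le fun a _ => hle a).1 hsum a (mem_univ a)

/-- The number of ways to complete a `k`-set to a `w`-set using `r` further points. The case split
replaces the truncated subtraction `w - k` when `k > w`. -/
def completions (r w k : ℕ) : ℕ := if k ≤ w then r.choose (w - k) else 0

lemma completions_succ (r w k : ℕ) :
    completions (r + 1) w k = completions r w (k + 1) + completions r w k := by
  unfold completions
  rcases lt_trichotomy k w with h | h | h
  · obtain ⟨j, rfl⟩ := Nat.exists_eq_add_of_lt h
    rw [if_pos (by omega), if_pos (by omega), if_pos (by omega),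
      show k + j + 1 - k = j + 1 by omega, show k + j + 1 - (k + 1) = j by omega,
      Nat.choose_succ_succ]
  · subst h; simp
  · rw [if_neg (by omega), if_neg (by omega), if_neg (by omega)]

lemma completions_mul (r w k : ℕ) :
    completions (r + 1) w k * (w - k) = (r + 1) * completions r w (k + 1) := by
  unfold completions
  rcases lt_trichotomy k w with h | h | h
  · obtain ⟨j, rfl⟩ := Nat.exists_eq_add_of_lt h
    rw [if_pos (by omega), if_pos (by omega),
      show k + j + 1 - k = j + 1 by omega, show k + j + 1 - (k + 1) = j by omega]
    exact (Nat.add_one_mul_choose_eq r j).symm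
  · subst h; simp
  · rw [if_neg (by omega), if_neg (by omega)]; simp

/-- The block of `s` labelled `j` in the partition of `s` encoded by the labelling `g`. -/
def block {X J : Type*} [DecidableEq J] (s : Finset X) (g : X → J) (j : J) : Finset X :=
  s.filter fun x => g x = j

/-- The induction behind Baranyai's theorem: `I` indexes partitions of `s` into blocks labelled by
`J`, and each `S ⊆ s` is a block as often as it is the trace on `s` of a `w`-set. -/
lemma exists_partial_baranyai {X I J : Type*} [Fintype X] [DecidableEq X] [Fintype I] [Fintype J]
    [DecidableEq J] [Nonempty J] (w : ℕ) (hX : Fintype.card X = Fintype.card J * w)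
    (hI : Fintype.card I * Fintype.card J = (Fintype.card X).choose w) (s : Finset X) :
    ∃ g : I → X → J, ∀ S ⊆ s,
      #{p : I × J | block s (g p.1) p.2 = S} = completions (Fintype.card X - #s) w #S := by
  induction s using Finset.induction_on with
  | empty =>
    refine ⟨fun _ _ => Classical.arbitrary J, fun S hS => ?_⟩
    obtain rfl := subset_empty.1 hS
    simp [block, completions, hI]
  | insert a s ha ih =>
    obtain ⟨g, hg⟩ := ih
    obtain ⟨r, hr⟩ : ∃ r, Fintype.card X = #s + r + 1 := by
      have := card_le_univ (insert a s)
      rw [card_insert_of_notMem ha] at this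
      exact ⟨Fintype.card X - #s - 1, by omega⟩
    rw [show Fintype.card X - #s = r + 1 by omega] at hg
    rw [card_insert_of_notMem ha, show Fintype.card X - (#s + 1) = r by omega]
    have hsub : ∀ i j, block s (g i) j ⊆ s := fun i j => filter_subset _ _
    have hblock : ∀ i j, #(block s (g i) j) ≤ w := by
      intro i j
      by_contra hlt
      have h := hg _ (hsub i j)
      rw [completions, if_neg hlt, card_eq_zero] at h
      exact notMem_empty (i, j) (h ▸ by simp)
    obtain ⟨f, hf⟩ := exists_exact_choice (fun i j => block s (g i) j) (fun S => w - #S)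
      (fun S => if S ⊆ s then completions r w (#S + 1) else 0) (r + 1) (by omega)
      (by
        intro i
        have h1 : ∑ j, (w - #(block s (g i) j)) + ∑ j, #(block s (g i) j) = Fintype.card J * w := by
          rw [← sum_add_distrib, sum_congr rfl fun j _ => Nat.sub_add_cancel (hblock i j)]
          simp
        have h2 : ∑ j, #(block s (g i) j) = #s :=
          (card_eq_sum_card_fiberwise (f := g i) (t := univ) (by simp)).symm
        omega)
      (by
        intro S
        split_ifs with hS
        · rw [hg S hS, completions_mul]
        · rw [mul_zero, filter_false_of_mem, card_empty, zero_mul]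
          rintro p - rfl
          exact hS (hsub _ _))
    -- The new point `a` joins the block `f i` of the `i`-th partition.
    refine ⟨fun i => Function.update (g i) a (f i), fun S hS => ?_⟩
    have hb : ∀ i j, block (insert a s) (Function.update (g i) a (f i)) j =
        if f i = j then insert a (block s (g i) j) else block s (g i) j := by
      intro i j
      have h : s.filter (fun x => Function.update (g i) a (f i) x = j) = block s (g i) j :=
        filter_congr fun x hx => by
          rw [Function.update_of_ne (ne_of_mem_of_not_mem hx ha)]
      rw [block, filter_insert, h, Function.update_self]
    have hna : ∀ i j, a ∉ block s (g i) j := fun i j h => ha (hsub i j h)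
    have hcount : ∀ S, #{p : I × J | f p.1 = p.2 ∧ block s (g p.1) p.2 = S}
        = #{i | block s (g i) (f i) = S} := by
      intro S
      symm
      refine card_bij (fun i _ => (i, f i)) ?_ ?_ ?_
      · intro i hi
        simpa using hi
      · intro i _ i' _ h
        exact congrArg Prod.fst h
      · rintro ⟨i, j⟩ h
        simp only [mem_filter, mem_univ, true_and] at h
        obtain ⟨rfl, h⟩ := h
        exact ⟨i, by simpa using h, rfl⟩
    by_cases haS : a ∈ S
    · have hS' : S.erase a ⊆ s := by rwa [← subset_insert_iff]
      have e : ({p : I × J | block (insert a s) (Function.update (g p.1) a (f p.1)) p.2 = S}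
          : Finset (I × J)) =
          ({p : I × J | f p.1 = p.2 ∧ block s (g p.1) p.2 = S.erase a} : Finset (I × J)) := by
        refine filter_congr fun p _ => ?_
        rw [hb]
        split_ifs with h
        · simp only [h, true_and]
          constructor
          · rintro rfl
            rw [erase_insert (hna _ _)]
          · intro h'
            rw [h', insert_erase haS]
        · simp only [h, false_and, iff_false]
          rintro rfl
          exact hna _ _ haS
      rw [e, hcount, hf, if_pos hS', card_erase_add_one haS]
    · have hS' : S ⊆ s := (subset_insert_iff_of_notMem haS).1 hS
      have e : ({p : I × J | block (insert a s) (Function.update (g p.1) a (f p.1)) p.2 = S}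
          : Finset (I × J)) =
          ({p : I × J | ¬ f p.1 = p.2 ∧ block s (g p.1) p.2 = S} : Finset (I × J)) := by
        refine filter_congr fun p _ => ?_
        rw [hb]
        split_ifs with h
        · simp only [h, not_true, false_and, iff_false]
          rintro rfl
          exact haS (mem_insert_self _ _)
        · simp [h]
      have h1 := hg S hS'
      have h2 := card_filter_add_card_filter_not
        (s := ({p : I × J | block s (g p.1) p.2 = S} : Finset (I × J))) (fun p => f p.1 = p.2)
      have h3 := hcount S
      rw [hf, if_pos hS'] at h3
      simp only [filter_filter, and_comm (a := block s _ _ = S)] at h2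
      rw [completions_succ] at h1
      rw [e]
      omega

/-- Baranyai's theorem: the `w`-subsets of `X` are the blocks, each occurring once, of partitions
indexed by `I`. -/
lemma exists_baranyai {X I J : Type*} [Fintype X] [DecidableEq X] [Fintype I] [Fintype J]
    [DecidableEq J] [Nonempty J] (w : ℕ) (hX : Fintype.card X = Fintype.card J * w)
    (hI : Fintype.card I * Fintype.card J = (Fintype.card X).choose w) :
    ∃ g : I → X → J, (∀ i j, #(block univ (g i) j) = w) ∧
      ∀ i j i' j', block univ (g i) j = block univ (g i') j' → i = i' := by
  obtain ⟨g, hg⟩ := exists_partial_baranyai w hX hI univ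
  simp only [card_univ, Nat.sub_self] at hg
  have hw : ∀ i j, #(block univ (g i) j) = w := by
    intro i j
    by_contra hne
    have h := hg (block univ (g i) j) (subset_univ _)
    have h0 : completions 0 w #(block univ (g i) j) = 0 := by
      unfold completions
      split_ifs with hle
      · exact Nat.choose_eq_zero_of_lt (by omega)
      · rfl
    rw [h0, card_eq_zero] at h
    exact notMem_empty (i, j) (h ▸ by simp)
  refine ⟨g, hw, fun i j i' j' h => ?_⟩
  have h1 := hg (block univ (g i) j) (subset_univ _)
  rw [hw] at h1
  have h2 := card_le_one.1 (h1.trans_le (by simp [completions])) (i, j) (by simp) (i', j')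
    (by simp [h])
  exact congrArg Prod.fst h2

/-- For positive integers `t`, `w` and `n = (t+1)·w`, there exists an `(n,t,w)`-CPC code
of size `binom(n−1, w−1)` (via Baranyai's theorem). -/
theorem exists_cpc_of_decomposition (t w : ℕ) (ht : 0 < t) (hw : 0 < w) :
    ∃ C : Fin (((t + 1) * w - 1).choose (w - 1)) → Set (Fin ((t + 1) * w) → Bool),
      IsCPCCode t w C := by
  have hI : ((t + 1) * w - 1).choose (w - 1) * (t + 1) = ((t + 1) * w).choose w := by
    obtain ⟨k, rfl⟩ := Nat.exists_eq_add_of_lt hw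
    obtain ⟨m, hm⟩ : ∃ m, (t + 1) * (0 + k + 1) = m + 1 :=
      Nat.exists_eq_succ_of_ne_zero (by positivity)
    have h := Nat.add_one_mul_choose_eq m k
    rw [hm]
    simp only [zero_add, Nat.add_sub_cancel] at hm ⊢
    rw [← hm] at h
    refine Nat.eq_of_mul_eq_mul_right (Nat.succ_pos k) ?_
    rw [Nat.succ_eq_add_one, ← hm, ← h]
    ring
  obtain ⟨g, hcard, hdisj⟩ := exists_baranyai (X := Fin ((t + 1) * w))
    (I := Fin (((t + 1) * w - 1).choose (w - 1))) (J := Fin (t + 1)) w (by simp) (by simpa using hI)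
  refine ⟨fun i => {u | ∃ j, supp u = block univ (g i) j}, ?_, ?_, ?_⟩
  · rintro i u ⟨j, hu⟩
    exact (congrArg card hu).trans (hcard i j)
  · intro i i' hne
    refine Set.disjoint_left.2 ?_
    rintro u ⟨j, hj⟩ ⟨j', hj'⟩
    exact hne (hdisj i j i' j' (hj.symm.trans hj'))
  · intro S hS i
    -- The `t` points of `S` meet at most `t` of the `t + 1` blocks.
    obtain ⟨j, hj⟩ : ∃ j, j ∉ S.image (g i) := by
      by_contra! h
      have h1 := card_le_card (fun j _ => h j : (univ : Finset (Fin (t + 1))) ⊆ S.image (g i))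
      have h2 := card_image_le (s := S) (f := g i)
      simp only [card_univ, Fintype.card_fin] at h1
      omega
    have hsupp : supp (fun x => decide (g i x = j)) = block univ (g i) j := by
      simp [supp, block]
    refine ⟨fun x => decide (g i x = j), ⟨j, hsupp⟩, ?_⟩
    rw [hsupp, ← disjoint_iff_inter_eq_empty, disjoint_left]
    intro x hx hxS
    exact hj (mem_image.2 ⟨x, hxS, by simpa [block] using hx⟩)
end

section
/- Let C be an [N,K,D]_q code. For every subset T of coordinate positions with |T| = N−D and every vector τ ∈ F_q^{N−D}, there are at most q codewords of C whose restriction to the coordinates of T equals τ. -/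
/-!
Two distinct codewords that agree on `T` can differ only on the `D` coordinates outside `T`;
since their distance is at least `D`, they differ on every one of them. As `D ≥ 1`, some
coordinate `j` lies outside `T`, so `u ↦ u j` is injective on the codewords with prescribed
restriction to `T`, and there are at most `|F| = q` of them.
-/

/-- `C` is an `[N,K,D]_q` linear code over `F`: a `K`-dimensional subspace of `F^N`
whose minimum Hamming distance equals `D`. -/
def IsLinearCode {F : Type*} [Field F] [Fintype F] [DecidableEq F] (N K D : ℕ)
    (C : Submodule F (Fin N → F)) : Prop :=
  Module.finrank F C = K ∧
  (∀ u ∈ C, ∀ v ∈ C, u ≠ v → D ≤ hammingDist u v) ∧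
  (∃ u ∈ C, ∃ v ∈ C, u ≠ v ∧ hammingDist u v = D)

/-- Let `C` be an `[N,K,D]_q` code. For every subset `T` of coordinate positions with
`|T| = N−D` and every vector `τ`, there are at most `q` codewords of `C` whose
restriction to the coordinates of `T` equals the restriction of `τ`. -/
theorem at_most_q_codewords_on_subset (q N K D : ℕ)
    (F : Type*) [Field F] [Fintype F] [DecidableEq F] (hF : Fintype.card F = q)
    (C : Submodule F (Fin N → F)) (hC : IsLinearCode N K D C)
    (T : Finset (Fin N)) (hT : T.card = N - D) (τ : Fin N → F) :
    Set.ncard {u : Fin N → F | u ∈ C ∧ ∀ i ∈ T, u i = τ i} ≤ q := by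
  obtain ⟨-, hmin, a, -, b, -, hab, hD⟩ := hC
  have hDpos : 0 < D := hD ▸ hammingDist_pos.mpr hab
  have hDN : D ≤ N := by
    simpa [hD] using hammingDist_le_card_fintype (x := a) (y := b)
  have hTc : Tᶜ.card = D := by
    rw [Finset.card_compl, Fintype.card_fin]
    omega
  obtain ⟨j, hj⟩ : Tᶜ.Nonempty := Finset.card_pos.mp (by omega)
  have hinj : Set.InjOn (fun u : Fin N → F => u j)
      {u : Fin N → F | u ∈ C ∧ ∀ i ∈ T, u i = τ i} := by
    rintro u ⟨hu, huT⟩ v ⟨hv, hvT⟩ huv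
    by_contra hne
    have hsub : (Finset.univ.filter fun i => u i ≠ v i) ⊆ Tᶜ := by
      intro i hi
      rw [Finset.mem_compl]
      intro hiT
      exact (Finset.mem_filter.mp hi).2 ((huT i hiT).trans (hvT i hiT).symm)
    have heq := Finset.eq_of_subset_of_card_le hsub (hTc.le.trans (hmin u hu v hv hne))
    rw [← heq] at hj
    exact (Finset.mem_filter.mp hj).2 huv
  calc _ ≤ (Set.univ : Set F).ncard :=
        Set.ncard_le_ncard_of_injOn _ (fun _ _ => Set.mem_univ _) hinj
    _ = q := by rw [Set.ncard_univ, Nat.card_eq_fintype_card, hF]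
end

section
/- Let q be a prime power and let N, K, D, w be positive integers with N−D+1 ≤ w ≤ D. If there exists an [N,K,D]_q code, then there exists a (qw, q−1, w)-CPC code of size q^{K−1}. -/
/-- The binary encoding of the restriction to `T` of a word `c`: the position `x`, labelled by `φ`
with a symbol `β` and a coordinate `j ∈ T`, carries a one exactly when `c j = β`. -/
def oneHot {F : Type*} [DecidableEq F] {N : ℕ} {X : Type*} {T : Finset (Fin N)}
    (φ : X ≃ F × T) (c : Fin N → F) : X → Bool :=
  fun x => decide (c (φ x).2 = (φ x).1)

theorem wt_oneHot {F : Type*} [DecidableEq F] {N : ℕ} {X : Type*} [Fintype X]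
    {T : Finset (Fin N)} (φ : X ≃ F × T) (c : Fin N → F) : wt (oneHot φ c) = T.card := by
  classical
  have h : (Finset.univ.filter fun x => oneHot φ c x = true)
      = (Finset.univ : Finset T).image fun j : T => φ.symm (c j, j) := by
    ext x
    simp only [oneHot, Finset.mem_filter, Finset.mem_univ, true_and, decide_eq_true_eq,
      Finset.mem_image]
    constructor
    · intro h
      exact ⟨(φ x).2, by rw [h]; simp⟩
    · rintro ⟨j, rfl⟩
      simp
  rw [wt, h, Finset.card_image_of_injective]
  · simp
  · intro a b hab
    simpa using congrArg Prod.snd (φ.symm.injective hab)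

/-- Words at distance at least `D` unless equal are determined by their encodings, provided that
fewer than `D` coordinates lie outside `T`. -/
theorem eq_of_oneHot_eq {F : Type*} [DecidableEq F] {N D : ℕ} {X : Type*}
    {T : Finset (Fin N)} (φ : X ≃ F × T) (hT : N < T.card + D) {c c' : Fin N → F}
    (hd : c ≠ c' → D ≤ hammingDist c c') (h : oneHot φ c = oneHot φ c') : c = c' := by
  by_contra hne
  have hagree : ∀ j ∈ T, c j = c' j := by
    intro j hj
    have := congrFun h (φ.symm (c j, ⟨j, hj⟩))
    simp only [oneHot, Equiv.apply_symm_apply, decide_true] at this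
    exact (of_decide_eq_true this.symm).symm
  have hle : hammingDist c c' ≤ Tᶜ.card := by
    refine Finset.card_le_card fun j hj => ?_
    simp only [Finset.mem_filter, Finset.mem_univ, true_and] at hj
    exact Finset.mem_compl.2 fun hjT => hj (hagree j hjT)
  rw [Finset.card_compl, Fintype.card_fin] at hle
  have := hd hne
  have := hammingDist_pos.2 hne
  omega

/-- Fewer than `|F|` forbidden positions cannot meet the support of every encoded word on the line
`c + F ∙ v` when `v` has no zero on `T`. -/
theorem exists_smul_avoiding {F : Type*} [Field F] [Fintype F] [DecidableEq F] {N : ℕ}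
    {X : Type*} [Fintype X] [DecidableEq X] {T : Finset (Fin N)} (φ : X ≃ F × T)
    {v : Fin N → F} (hv : ∀ j ∈ T, v j ≠ 0) (c : Fin N → F) (S : Finset X)
    (hS : S.card < Fintype.card F) :
    ∃ a : F, supp (oneHot φ (c + a • v)) ∩ S = ∅ := by
  -- The only scalar ruled out by the position `x`.
  let bad : X → F := fun x => ((φ x).1 - c (φ x).2) / v (φ x).2
  obtain ⟨a, ha⟩ : ∃ a, a ∉ S.image bad := by
    by_contra! hall
    have hcard := Finset.card_image_le (s := S) (f := bad)
    rw [Finset.eq_univ_of_forall hall, Finset.card_univ] at hcard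
    omega
  refine ⟨a, Finset.eq_empty_of_forall_notMem fun x hx => ha ?_⟩
  simp only [supp, oneHot, Finset.mem_inter, Finset.mem_filter, Finset.mem_univ, true_and,
    decide_eq_true_eq, Pi.add_apply, Pi.smul_apply, smul_eq_mul] at hx
  refine Finset.mem_image.2 ⟨x, hx.2, ?_⟩
  rw [div_eq_iff (hv _ (φ x).2.2), ← hx.1]
  ring


/-- Let `q` be a prime power and `N, K, D, w` positive integers with `N−D+1 ≤ w ≤ D`.
If there exists an `[N,K,D]_q` code, then there exists a `(qw, q−1, w)`-CPC code of size
`q^{K−1}`. -/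
theorem cpc_from_linear_code (q N K D w : ℕ) (hq : IsPrimePow q)
    (hN : 0 < N) (hK : 0 < K) (hD : 0 < D) (hw : 0 < w)
    (h1 : N - D + 1 ≤ w) (h2 : w ≤ D)
    (F : Type*) [Field F] [Fintype F] [DecidableEq F] (hF : Fintype.card F = q)
    (C : Submodule F (Fin N → F)) (hC : IsLinearCode N K D C) :
    ∃ Dc : Fin (q ^ (K - 1)) → Set (Fin (q * w) → Bool),
      IsCPCCode (q - 1) w Dc := by
  obtain ⟨hdim, hmin, u₀, hu₀, u₁, hu₁, -, hdist⟩ := hC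
  -- The difference of two words at minimum distance is a word of minimum weight.
  let v : C := ⟨u₀ - u₁, C.sub_mem hu₀ hu₁⟩
  obtain ⟨T, hTsub, hTcard⟩ :
      ∃ T ⊆ Finset.univ.filter (fun j => u₀ j ≠ u₁ j), T.card = w :=
    Finset.exists_subset_card_eq (h2.trans hdist.ge)
  have hvT : ∀ j ∈ T, (v : Fin N → F) j ≠ 0 := fun j hj =>
    sub_ne_zero.2 (Finset.mem_filter.1 (hTsub hj)).2
  have hv : v ≠ 0 := by
    obtain ⟨j, hj⟩ := Finset.card_pos.1 (hTcard ▸ hw)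
    intro h
    exact hvT j hj (by rw [h]; rfl)
  let L : Submodule F C := Submodule.span F {v}
  let φ : Fin (q * w) ≃ F × T := Fintype.equivOfCardEq (by simp [hF, hTcard])
  have hquot : Nat.card (C ⧸ L) = q ^ (K - 1) := by
    have h := Submodule.finrank_quotient_add_finrank L
    rw [finrank_span_singleton hv, hdim] at h
    rw [Module.natCard_eq_pow_finrank (K := F), Nat.card_eq_fintype_card, hF]
    congr 1
    omega
  have : Finite (C ⧸ L) := Quotient.finite _
  let e : Fin (q ^ (K - 1)) ≃ C ⧸ L := (finCongr hquot.symm).trans (Finite.equivFin _).symm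
  refine ⟨fun i => {x | ∃ c : C, L.mkQ c = e i ∧ x = oneHot φ c}, ?_, ?_, ?_⟩
  · rintro i _ ⟨c, -, rfl⟩
    rw [wt_oneHot, hTcard]
  · intro i i' hne
    refine Set.disjoint_left.2 ?_
    rintro _ ⟨c, hc, rfl⟩ ⟨c', hc', heq⟩
    have hcc : c = c' := Subtype.ext <|
      eq_of_oneHot_eq φ (D := D) (by omega) (hmin _ c.2 _ c'.2) heq
    exact hne (e.injective (by rw [← hc, ← hc', hcc]))
  · intro S hS i
    obtain ⟨c, hc⟩ := L.mkQ_surjective (e i)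
    have hq0 := hq.pos
    obtain ⟨a, ha⟩ := exists_smul_avoiding φ hvT (c : Fin N → F) S (by omega)
    refine ⟨_, ⟨c + a • v, ?_, rfl⟩, ha⟩
    have hav : L.mkQ (a • v) = 0 := by
      rw [Submodule.mkQ_apply, Submodule.Quotient.mk_eq_zero]
      exact L.smul_mem a (Submodule.mem_span_singleton_self v)
    rw [map_add, hav, add_zero, hc]
end

section
/- Let n, w be positive integers with w ≥ 2 such that q = n/w is a prime power with q ≥ 2w−2. Then there exists an (n, q−1, w)-CPC code of size (n/w)^{w−1}. -/
/-- The binary word, with coordinates identified by `e` with `Fin w × ZMod q`, whose support is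
the graph of `f`. -/
def graphWord {X : Type*} {q w : ℕ} (e : X ≃ Fin w × ZMod q) (f : Fin w → ZMod q) (x : X) : Bool :=
  decide ((e x).2 = f (e x).1)

theorem graphWord_eq_true {X : Type*} {q w : ℕ} (e : X ≃ Fin w × ZMod q) (f : Fin w → ZMod q)
    (x : X) : graphWord e f x = true ↔ (e x).2 = f (e x).1 := by
  simp [graphWord]

theorem wt_graphWord {X : Type*} [Fintype X] {q w : ℕ} (e : X ≃ Fin w × ZMod q)
    (f : Fin w → ZMod q) : wt (graphWord e f) = w := by
  classical
  have h : (Finset.univ.filter fun x => graphWord e f x = true)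
      = Finset.univ.image fun i => e.symm (i, f i) := by
    ext x
    simp only [Finset.mem_filter, Finset.mem_univ, true_and, Finset.mem_image, graphWord_eq_true,
      Equiv.symm_apply_eq]
    exact ⟨fun h => ⟨(e x).1, by rw [← h]⟩, fun ⟨i, hi⟩ => by rw [← hi]⟩
  have hinj : Function.Injective fun i => e.symm (i, f i) := fun i j hij =>
    congrArg Prod.fst (e.symm.injective hij)
  rw [wt, h, Finset.card_image_of_injective _ hinj, Finset.card_univ, Fintype.card_fin]

theorem graphWord_injective {X : Type*} {q w : ℕ} (e : X ≃ Fin w × ZMod q) :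
    Function.Injective (graphWord e) := by
  intro f g h
  funext i
  have hi := congrFun h (e.symm (i, f i))
  simpa [graphWord] using hi

/-- Let `n, w` be positive integers with `w ≥ 2` such that `q = n/w` is a prime power
with `q ≥ 2w−2`. Then there exists an `(n, q−1, w)`-CPC code of size `(n/w)^{w−1}`. -/
theorem exists_cpc_from_mds (n w q : ℕ) (hn : 0 < n) (hw : 2 ≤ w)
    (hq : n = q * w) (hpp : IsPrimePow q) (hq2 : 2 * w - 2 ≤ q) :
    ∃ C : Fin (q ^ (w - 1)) → Set (Fin n → Bool),
      IsCPCCode (q - 1) w C := by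
  obtain ⟨m, rfl⟩ : ∃ m, w = m + 1 := ⟨w - 1, by omega⟩
  have hq0 : 0 < q := hpp.pos
  have : NeZero q := ⟨hq0.ne'⟩
  let e : Fin n ≃ Fin (m + 1) × ZMod q := Fintype.equivOfCardEq (by
    simp [ZMod.card, hq, mul_comm])
  let k : Fin (q ^ (m + 1 - 1)) ≃ (Fin m → ZMod q) := Fintype.equivOfCardEq (by
    simp [ZMod.card])
  -- The representative of the coset with index `i`; it vanishes at `0`.
  let r : Fin (q ^ (m + 1 - 1)) → Fin (m + 1) → ZMod q := fun i => Fin.cons 0 (k i)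
  refine ⟨fun i => Set.range fun c : ZMod q => graphWord e fun j => r i j + c, ?_, ?_, ?_⟩
  · rintro i _ ⟨c, rfl⟩
    exact wt_graphWord e _
  · intro i j hij
    rw [Set.disjoint_left]
    rintro _ ⟨c, rfl⟩ ⟨d, hd⟩
    have h := graphWord_injective e hd
    have hdc : d = c := by simpa [r] using congrFun h 0
    apply hij
    apply k.injective
    funext l
    simpa [r, hdc] using (congrFun h l.succ).symm
  · intro S hS i
    by_contra! hmeet
    have hx : ∀ c : ZMod q, ∃ x ∈ S, (e x).2 = r i (e x).1 + c := by
      intro c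
      obtain ⟨x, hx⟩ := hmeet _ ⟨c, rfl⟩
      rw [Finset.mem_inter, supp, Finset.mem_filter, graphWord_eq_true] at hx
      exact ⟨x, hx.2, hx.1.2⟩
    choose x hxS hxc using hx
    -- A coordinate lies in the support of only one word of the coset, so `S` has `q` elements.
    have hinj : Function.Injective x := fun c d hcd => by
      have h := hxc c
      rw [hcd, hxc d] at h
      exact (add_left_cancel h).symm
    have hcard := Finset.card_le_card_of_injOn (s := Finset.univ) (t := S) x
      (fun c _ => hxS c) hinj.injOn
    rw [Finset.card_univ, ZMod.card, hS] at hcard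
    omega
end

section
/- Let n, t, w be positive integers with t + w ≤ n and t ≥ n/w, and let q be a prime power with q ≥ n+w−1. If there exists an (n,t,w)-CPC code of size m, then there exists an (nq, tq, w)-CPC code of size m·q^{w−1}. -/
open Polynomial in
/-- The polynomial `c + X * Q`, where `Q` is the polynomial of degree less than `k` with coefficient
vector `s`. -/
noncomputable def graphPoly {F : Type*} [Field F] {k : ℕ} (s : Fin k → F) (c : F) : F[X] :=
  C c + X * ((degreeLTEquiv F k).symm s : F[X])

open Polynomial in
lemma graphPoly_degree_lt {F : Type*} [Field F] {k : ℕ} (s : Fin k → F) (c : F) :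
    (graphPoly s c).degree < ((k + 1 : ℕ) : WithBot ℕ) := by
  rw [← mem_degreeLT]
  have hQ := ((degreeLTEquiv F k).symm s).2
  rw [mem_degreeLT] at hQ
  refine Submodule.add_mem _ ?_ ?_
  · rw [mem_degreeLT]
    exact lt_of_le_of_lt degree_C_le (by exact_mod_cast Nat.succ_pos k)
  · rw [mem_degreeLT, degree_lt_iff_coeff_zero]
    rw [degree_lt_iff_coeff_zero] at hQ
    intro j hj
    obtain ⟨j, rfl⟩ : ∃ j', j = j' + 1 := ⟨j - 1, by omega⟩
    rw [coeff_X_mul]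
    exact hQ j (by omega)

open Polynomial in
lemma graphPoly_injective {F : Type*} [Field F] {k : ℕ} {s s' : Fin k → F} {c c' : F}
    (h : graphPoly s c = graphPoly s' c') : s = s' := by
  apply (degreeLTEquiv F k).symm.injective
  apply Subtype.ext
  ext j
  have := congrArg (fun p => p.coeff (j + 1)) h
  simpa [graphPoly, coeff_C] using this

/-- The word `u` copied onto the graph of `x ↦ (graphPoly s c).eval (a x)`. -/
noncomputable def liftWord {X F : Type*} [Field F] [DecidableEq F] {k : ℕ} (a : X ↪ F)
    (s : Fin k → F) (c : F) (u : X → Bool) : X × F → Bool :=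
  fun p => u p.1 && decide (p.2 = (graphPoly s c).eval (a p.1))

lemma liftWord_eq_true {X F : Type*} [Field F] [DecidableEq F] {k : ℕ} (a : X ↪ F)
    (s : Fin k → F) (c : F) (u : X → Bool) (p : X × F) :
    liftWord a s c u p = true ↔ u p.1 = true ∧ p.2 = (graphPoly s c).eval (a p.1) := by
  simp [liftWord]

/-- The codeset with index `(i, s)`: all words of `C i`, copied onto all translates of the graph
given by `s`. -/
def liftCode {X F ι : Type*} [Field F] [DecidableEq F] {k : ℕ} (a : X ↪ F)
    (C : ι → Set (X → Bool)) (j : ι × (Fin k → F)) : Set (X × F → Bool) :=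
  {v | ∃ u ∈ C j.1, ∃ c, v = liftWord a j.2 c u}

lemma wt_liftWord {X F : Type*} [Fintype X] [Field F] [Fintype F] [DecidableEq F]
    {k : ℕ} (a : X ↪ F) (s : Fin k → F) (c : F) (u : X → Bool) :
    wt (liftWord a s c u) = wt u := by
  unfold wt
  symm
  refine Finset.card_bij (fun x _ => (x, (graphPoly s c).eval (a x))) ?_ ?_ ?_
  · intro x hx
    simpa [liftWord_eq_true] using hx
  · intro x _ y _ h
    exact congrArg Prod.fst h
  · rintro ⟨x, y⟩ h
    simp only [Finset.mem_filter, Finset.mem_univ, true_and, liftWord_eq_true] at h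
    exact ⟨x, by simpa using h.1, by rw [h.2]⟩

lemma liftWord_injective_word {X F : Type*} [Field F] [DecidableEq F] {k : ℕ} (a : X ↪ F)
    {s s' : Fin k → F} {c c' : F} {u u' : X → Bool}
    (h : liftWord a s c u = liftWord a s' c' u') : u = u' := by
  funext x
  rw [Bool.eq_iff_iff]
  constructor
  · intro hx
    have h1 := (liftWord_eq_true a s c u (x, (graphPoly s c).eval (a x))).2 ⟨hx, rfl⟩
    rw [h, liftWord_eq_true] at h1
    exact h1.1
  · intro hx
    have h1 := (liftWord_eq_true a s' c' u' (x, (graphPoly s' c').eval (a x))).2 ⟨hx, rfl⟩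
    rw [← h, liftWord_eq_true] at h1
    exact h1.1

/-- A copied word of weight `k + 1` determines the graph it lies on, by uniqueness of polynomial
interpolation. -/
lemma liftWord_injective_label {X F : Type*} [Fintype X] [Field F] [DecidableEq F] {k : ℕ}
    (a : X ↪ F) {s s' : Fin k → F} {c c' : F} {u u' : X → Bool} (hu : wt u = k + 1)
    (h : liftWord a s c u = liftWord a s' c' u') : s = s' := by
  apply graphPoly_injective (c := c) (c' := c')
  have hcard : ((supp u).map a).card = k + 1 := by
    rw [Finset.card_map]
    exact hu
  refine Polynomial.eq_of_degrees_lt_of_eval_finset_eq ((supp u).map a) ?_ ?_ ?_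
  · rw [hcard]
    exact graphPoly_degree_lt s c
  · rw [hcard]
    exact graphPoly_degree_lt s' c'
  · intro y hy
    obtain ⟨x, hx, rfl⟩ := Finset.mem_map.1 hy
    have hx : u x = true := by simpa [supp] using hx
    have h1 := (liftWord_eq_true a s c u (x, (graphPoly s c).eval (a x))).2 ⟨hx, rfl⟩
    rw [h, liftWord_eq_true] at h1
    exact h1.2

lemma liftCode_disjoint {X F ι : Type*} [Fintype X] [Field F] [DecidableEq F] {k : ℕ}
    (a : X ↪ F) (C : ι → Set (X → Bool)) (hwt : ∀ i, ∀ u ∈ C i, wt u = k + 1)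
    (hdisj : Pairwise fun i j => Disjoint (C i) (C j)) :
    Pairwise fun i j => Disjoint (liftCode (k := k) a C i) (liftCode a C j) := by
  rintro ⟨i, s⟩ ⟨i', s'⟩ hne
  rw [Set.disjoint_left]
  rintro v ⟨u, hu, c, rfl⟩ ⟨u', hu', c', h⟩
  apply hne
  have hs : s = s' := liftWord_injective_label a (hwt i u hu) h
  have huu : u = u' := liftWord_injective_word a h
  subst huu
  have hi : i = i' := by
    by_contra hii
    exact Set.disjoint_left.1 (hdisj hii) hu hu'
  rw [hi, hs]

/-- By averaging, one of the disjoint graphs indexed by `c` meets `S` in at most `t` points; a word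
of `C i` avoiding the corresponding columns, copied onto that graph, avoids `S`. -/
lemma liftCode_cooling {X F ι : Type*} [Fintype X] [DecidableEq X] [Field F] [Fintype F]
    [DecidableEq F] {k t : ℕ} (a : X ↪ F) (C : ι → Set (X → Bool)) (htX : t ≤ Fintype.card X)
    (hcool : ∀ S : Finset X, S.card = t → ∀ i, ∃ u ∈ C i, supp u ∩ S = ∅)
    (S : Finset (X × F)) (hS : S.card = t * Fintype.card F) (j : ι × (Fin k → F)) :
    ∃ v ∈ liftCode a C j, supp v ∩ S = ∅ := by
  obtain ⟨i, s⟩ := j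
  -- The unique `c` whose graph passes through `p` is `p.2 - (graphPoly s 0).eval (a p.1)`.
  obtain ⟨c, -, hc⟩ := Finset.exists_card_fiber_le_of_card_le_mul (s := S)
    (t := (Finset.univ : Finset F)) (f := fun p => p.2 - (graphPoly s 0).eval (a p.1)) (n := t)
    Finset.univ_nonempty (by rw [hS, Finset.card_univ, mul_comm])
  obtain ⟨T, hT, hTcard⟩ := Finset.exists_superset_card_eq
    (Finset.card_image_le.trans hc :
      ((S.filter fun p => p.2 - (graphPoly s 0).eval (a p.1) = c).image Prod.fst).card ≤ t) htX
  obtain ⟨u, hu, huT⟩ := hcool T hTcard i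
  refine ⟨liftWord a s c u, ⟨u, hu, c, rfl⟩, ?_⟩
  rw [Finset.eq_empty_iff_forall_notMem]
  intro p hp
  obtain ⟨hp, hpS⟩ := Finset.mem_inter.1 hp
  have hp : liftWord a s c u p = true := by simpa [supp] using hp
  rw [liftWord_eq_true] at hp
  have hpT : p.1 ∈ T := by
    refine hT (Finset.mem_image_of_mem _ (Finset.mem_filter.2 ⟨hpS, ?_⟩))
    rw [hp.2]
    simp [graphPoly]
  have : p.1 ∈ supp u ∩ T := Finset.mem_inter.2 ⟨by simpa [supp] using hp.1, hpT⟩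
  rw [huT] at this
  simp at this

lemma IsCPCCode.liftCode {X F ι : Type*} [Fintype X] [DecidableEq X] [Field F] [Fintype F]
    [DecidableEq F] {k t : ℕ} (a : X ↪ F) {C : ι → Set (X → Bool)} (htX : t ≤ Fintype.card X)
    (hC : IsCPCCode t (k + 1) C) :
    IsCPCCode (t * Fintype.card F) (k + 1) (liftCode (k := k) a C) := by
  obtain ⟨hwt, hdisj, hcool⟩ := hC
  refine ⟨?_, liftCode_disjoint a C hwt hdisj, fun S hS j => liftCode_cooling a C htX hcool S hS j⟩
  rintro j v ⟨u, hu, c, rfl⟩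
  rw [wt_liftWord, hwt _ u hu]

/-- CPC codes can be relabelled along bijections of the coordinates and of the index set. -/
lemma IsCPCCode.reindex {X Y ι κ : Type*} [Fintype X] [DecidableEq X] [Fintype Y] [DecidableEq Y]
    {t w : ℕ} {C : ι → Set (X → Bool)} (hC : IsCPCCode t w C) (e : Y ≃ X) (f : κ ≃ ι) :
    IsCPCCode t w fun k => {v : Y → Bool | v ∘ e.symm ∈ C (f k)} := by
  obtain ⟨hwt, hdisj, hcool⟩ := hC
  refine ⟨?_, ?_, ?_⟩
  · intro k v hv
    rw [← hwt _ _ hv]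
    unfold wt
    refine Finset.card_bij (fun y _ => e y) ?_ ?_ ?_
    · intro y hy
      simpa using hy
    · intro y _ y' _ h
      exact e.injective h
    · intro x hx
      exact ⟨e.symm x, by simpa using hx, by simp⟩
  · intro k l hkl
    rw [Set.disjoint_left]
    intro v hv hv'
    exact Set.disjoint_left.1 (hdisj (f.injective.ne hkl)) hv hv'
  · intro S hS k
    obtain ⟨u, hu, huS⟩ := hcool (S.map e.toEmbedding) (by rw [Finset.card_map, hS]) (f k)
    refine ⟨u ∘ e, by simpa [Function.comp_assoc] using hu, ?_⟩
    rw [Finset.eq_empty_iff_forall_notMem] at huS ⊢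
    intro y hy
    apply huS (e y)
    simpa [supp] using hy

/-- Recursive construction: let `n, t, w` be positive integers with `t + w ≤ n` and
`t ≥ n/w`, and let `q` be a prime power with `q ≥ n+w−1`. If there exists an
`(n,t,w)`-CPC code of size `m`, then there exists an `(nq, tq, w)`-CPC code of size
`m·q^{w−1}`. -/
theorem cpc_recursive_construction (n t w m q : ℕ)
    (hn : 0 < n) (ht : 0 < t) (hw : 0 < w)
    (htw : t + w ≤ n) (htn : n ≤ t * w)
    (hq : IsPrimePow q) (hq2 : n + w - 1 ≤ q)
    (C : Fin m → Set (Fin n → Bool)) (hC : IsCPCCode t w C) :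
    ∃ C' : Fin (m * q ^ (w - 1)) → Set (Fin (n * q) → Bool),
      IsCPCCode (t * q) w C' := by
  obtain ⟨k, rfl⟩ : ∃ k, w = k + 1 := ⟨w - 1, by omega⟩
  obtain ⟨F, _, _, hF⟩ : ∃ (F : Type) (_ : Field F) (_ : Fintype F), Fintype.card F = q := by
    obtain ⟨inst⟩ := Fintype.nonempty_field_iff.2
      (show IsPrimePow (Fintype.card (Fin q)) by rwa [Fintype.card_fin])
    exact ⟨Fin q, inst, inferInstance, Fintype.card_fin q⟩
  classical
  obtain ⟨a⟩ : Nonempty (Fin n ↪ F) :=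
    Function.Embedding.nonempty_of_card_le (by rw [Fintype.card_fin, hF]; omega)
  have e : Fin (n * q) ≃ Fin n × F := Fintype.equivOfCardEq (by simp [hF])
  have f : Fin (m * q ^ (k + 1 - 1)) ≃ Fin m × (Fin k → F) :=
    Fintype.equivOfCardEq (by simp [hF])
  have h := (hC.liftCode a (by rw [Fintype.card_fin]; omega)).reindex e f
  rw [hF] at h
  exact ⟨_, h⟩
end

section
/- Let n, t, w be positive integers with t + w ≤ n, and let q be a prime power with q ≥ n+w−1. Then there exists an (nq, tq, w)-LPC code of size ∑_{i=0}^{w−1} q^i. -/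
open Polynomial in
/-- The polynomial `a₀ X + a₁ X ^ 2 + ⋯ + aᵢ₋₁ X ^ i`. -/
noncomputable def polyOf {F : Type*} [Field F] {i : ℕ} (a : Fin i → F) : F[X] :=
  ∑ j : Fin i, monomial (j + 1 : ℕ) (a j)

lemma polyOf_coeff {F : Type*} [Field F] {i : ℕ} (a : Fin i → F) (j : Fin i) :
    (polyOf a).coeff (j + 1) = a j := by
  simp [polyOf, Polynomial.finsetSum_coeff, Polynomial.coeff_monomial, Fin.val_inj]

lemma polyOf_add_C_degree {F : Type*} [Field F] {i : ℕ} (a : Fin i → F) (c : F) :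
    (polyOf a + Polynomial.C c).degree < ((i + 1 : ℕ) : WithBot ℕ) := by
  rw [← Polynomial.mem_degreeLT]
  refine Submodule.add_mem _ (Submodule.sum_mem _ fun j _ => ?_) ?_
  · rw [Polynomial.mem_degreeLT]
    refine (Polynomial.degree_monomial_le _ _).trans_lt ?_
    have := j.2
    exact_mod_cast (by omega : (j : ℕ) + 1 < i + 1)
  · rw [Polynomial.mem_degreeLT]
    refine Polynomial.degree_C_le.trans_lt ?_
    exact_mod_cast Nat.succ_pos i

lemma polyOf_unique {F : Type*} [Field F] {i : ℕ} (a b : Fin i → F) (c d : F) (s : Finset F)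
    (hs : s.card = i + 1)
    (h : ∀ x ∈ s, (polyOf a).eval x + c = (polyOf b).eval x + d) : a = b := by
  have key : polyOf a + Polynomial.C c = polyOf b + Polynomial.C d := by
    refine Polynomial.eq_of_degrees_lt_of_eval_finset_eq s ?_ ?_ ?_
    · rw [hs]; exact polyOf_add_C_degree a c
    · rw [hs]; exact polyOf_add_C_degree b d
    · intro x hx
      simpa using h x hx
  funext j
  have := congrArg (fun p => p.coeff (j + 1)) key
  simpa [polyOf_coeff, Polynomial.coeff_C] using this

/-- The words of weight `i + 1` supported on the graph of `polyOf a + c` for some constant `c`.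
The coordinate `x` stands for the grid point `e x`, whose first entry `k` has abscissa `α k`. -/
def codeset {F X : Type*} [Field F] [Fintype X] {n i : ℕ} (e : X ≃ Fin n × F)
    (α : Fin n ↪ F) (a : Fin i → F) : Set (X → Bool) :=
  {u | wt u = i + 1 ∧ ∃ c : F, ∀ x ∈ supp u, (e x).2 = (polyOf a).eval (α (e x).1) + c}

lemma eq_of_mem_codeset {F X : Type*} [Field F] [Fintype X] {n i : ℕ}
    (e : X ≃ Fin n × F) (α : Fin n ↪ F) (a b : Fin i → F) (u : X → Bool)
    (ha : u ∈ codeset e α a) (hb : u ∈ codeset e α b) : a = b := by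
  classical
  obtain ⟨hu, c, hc⟩ := ha
  obtain ⟨-, d, hd⟩ := hb
  refine polyOf_unique a b c d ((supp u).image fun x => α (e x).1) ?_ ?_
  · -- A graph has one point over each abscissa.
    rw [Finset.card_image_of_injOn]
    · exact hu
    · intro x hx y hy hxy
      have h1 : (e x).1 = (e y).1 := α.injective hxy
      apply e.injective
      refine Prod.ext h1 ?_
      rw [hc x hx, hc y hy, h1]
  · intro z hz
    obtain ⟨x, hx, rfl⟩ := Finset.mem_image.1 hz
    rw [← hc x hx, ← hd x hx]

lemma exists_mem_codeset {F X : Type*} [Field F] [Fintype F] [Fintype X] [DecidableEq X]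
    {n i t : ℕ} (e : X ≃ Fin n × F) (α : Fin n ↪ F) (a : Fin i → F) (hi : t + (i + 1) ≤ n)
    (S : Finset X) (hS : S.card = t * Fintype.card F) :
    ∃ u ∈ codeset e α a, supp u ∩ S = ∅ := by
  classical
  have hX : Fintype.card X = n * Fintype.card F := by
    rw [Fintype.card_congr e]; simp
  obtain ⟨c, -, hc⟩ := Finset.exists_le_card_fiber_of_mul_le_card_of_maps_to
    (s := Sᶜ) (t := (Finset.univ : Finset F)) (n := i + 1)
    (f := fun x => (e x).2 - (polyOf a).eval (α (e x).1))
    (fun _ _ => Finset.mem_univ _) Finset.univ_nonempty (by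
      rw [Finset.card_compl, hX, hS, ← Nat.sub_mul, Finset.card_univ, Nat.mul_comm]
      exact Nat.mul_le_mul_right _ (by omega))
  obtain ⟨T, hT, hTc⟩ := Finset.exists_subset_card_eq hc
  have hsupp : supp (fun x => decide (x ∈ T)) = T := by
    ext x; simp [supp]
  refine ⟨fun x => decide (x ∈ T), ⟨?_, c, ?_⟩, ?_⟩
  · change (supp _).card = _
    rw [hsupp, hTc]
  · intro x hx
    rw [hsupp] at hx
    rw [← (Finset.mem_filter.1 (hT hx)).2]
    ring
  · rw [hsupp, ← Finset.disjoint_iff_inter_eq_empty, Finset.disjoint_left]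
    intro x hx
    exact Finset.mem_compl.1 (Finset.mem_filter.1 (hT hx)).1

/-- Let `n, t, w` be positive integers with `t + w ≤ n`, and let `q` be a prime power
with `q ≥ n+w−1`. Then there exists an `(nq, tq, w)`-LPC code of size
`∑_{i=0}^{w−1} q^i`. -/
theorem exists_lpc_recursive (n t w q : ℕ)
    (hn : 0 < n) (ht : 0 < t) (hw : 0 < w)
    (htw : t + w ≤ n) (hq : IsPrimePow q) (hq2 : n + w - 1 ≤ q) :
    ∃ C : Fin (∑ i ∈ Finset.range w, q ^ i) → Set (Fin (n * q) → Bool),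
      IsLPCCode (t * q) w C := by
  classical
  obtain ⟨p, k, hp, hk, rfl⟩ := (isPrimePow_nat_iff q).1 hq
  have : Fact p.Prime := ⟨hp⟩
  let F := GaloisField p k
  have : Fintype F := Fintype.ofFinite F
  have hF : Fintype.card F = p ^ k := by
    rw [← Nat.card_eq_fintype_card]; exact GaloisField.card p k hk.ne'
  rw [← hF] at hq2 ⊢
  obtain ⟨α⟩ : Nonempty (Fin n ↪ F) :=
    Function.Embedding.nonempty_of_card_le (by rw [Fintype.card_fin]; omega)
  let e : Fin (n * Fintype.card F) ≃ Fin n × F := Fintype.equivOfCardEq (by simp)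
  let g : Fin (∑ i ∈ Finset.range w, Fintype.card F ^ i) ≃ (Σ i : Fin w, (Fin i → F)) :=
    Fintype.equivOfCardEq (by simp [Finset.sum_range])
  refine ⟨fun m => codeset e α (g m).2, ?_, ?_, ?_⟩
  · intro m u hu
    have := (g m).1.2
    rw [hu.1]
    omega
  · intro m m' hne
    rw [Set.disjoint_left]
    intro u hu hu'
    apply hne
    apply g.injective
    change u ∈ codeset e α (g m).2 at hu
    change u ∈ codeset e α (g m').2 at hu'
    generalize g m = x at hu ⊢
    generalize g m' = y at hu' ⊢
    obtain ⟨i, a⟩ := x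
    obtain ⟨j, b⟩ := y
    obtain rfl : i = j := Fin.ext (Nat.succ_injective (hu.1.symm.trans hu'.1))
    rw [eq_of_mem_codeset e α a b u hu hu']
  · intro S hS m
    have := (g m).1.2
    exact exists_mem_codeset e α (g m).2 (by omega) S hS
end

section
/- Let t+1 ≤ n and let V_1, V_2, …, V_M be a partial (t+1)-spread of F_2^n, i.e., (t+1)-dimensional linear subspaces of F_2^n with V_i ∩ V_j = {0} for all i ≠ j. Then the collection {V_1 ∖ {0}, V_2 ∖ {0}, …, V_M ∖ {0}}, identifying F_2^n with {0,1}^n, is an (n,t)-cooling code of size M. -/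
/-- An `(n,t)`-cooling code: a family of pairwise disjoint codesets of binary words of
length `n` such that for every set `S` of `t` coordinates and every codeset there is a
codeword in the codeset whose support avoids `S`. -/
def IsCoolingCode {X : Type*} [Fintype X] [DecidableEq X] {ι : Type*} (t : ℕ)
    (C : ι → Set (X → Bool)) : Prop :=
  (Pairwise fun i j => Disjoint (C i) (C j)) ∧
  (∀ S : Finset X, S.card = t → ∀ i, ∃ u ∈ C i, supp u ∩ S = ∅)

/-- If `V_1, …, V_M` is a partial `(t+1)`-spread of `F_2^n` (with `t+1 ≤ n`), then the
collection `{V_1 ∖ {0}, …, V_M ∖ {0}}`, identifying `F_2^n` with `{0,1}^n`, is an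
`(n,t)`-cooling code of size `M`. -/
theorem cooling_code_from_partial_spread (n t M : ℕ) (ht : t + 1 ≤ n)
    (V : Fin M → Submodule (ZMod 2) (Fin n → ZMod 2))
    (hdim : ∀ i, Module.finrank (ZMod 2) (V i) = t + 1)
    (hdisj : ∀ i j, i ≠ j → V i ⊓ V j = ⊥) :
    IsCoolingCode t (fun i =>
      (fun v : Fin n → ZMod 2 => fun j => decide (v j ≠ 0)) ''
        ((V i : Set (Fin n → ZMod 2)) \ {0})) := by
  refine ⟨fun i j hij => ?_, fun S hS i => ?_⟩
  · refine Set.disjoint_left.mpr ?_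
    rintro _ ⟨v, ⟨hv, hv0⟩, rfl⟩ ⟨w, ⟨hw, -⟩, hwv⟩
    -- Over `ZMod 2` a word is determined by its support.
    have hbit : ∀ a b : ZMod 2, decide (a ≠ 0) = decide (b ≠ 0) → a = b := by decide
    obtain rfl : w = v := funext fun k => hbit _ _ (congrFun hwv k)
    have hmem : w ∈ V i ⊓ V j := ⟨hv, hw⟩
    rw [hdisj i j hij] at hmem
    exact hv0 hmem
  · -- Restriction to the coordinates in `S` maps dimension `t + 1` to dimension `t`.
    let f : V i →ₗ[ZMod 2] (S → ZMod 2) :=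
      (LinearMap.funLeft (ZMod 2) (ZMod 2) (Subtype.val : S → Fin n)).comp (V i).subtype
    have hlt : Module.finrank (ZMod 2) (S → ZMod 2) < Module.finrank (ZMod 2) (V i) := by
      rw [hdim i, Module.finrank_fintype_fun_eq_card, Fintype.card_coe, hS]
      exact Nat.lt_succ_self t
    obtain ⟨v, hvker, hv0⟩ :=
      (Submodule.ne_bot_iff _).mp (LinearMap.ker_ne_bot_of_finrank_lt (f := f) hlt)
    refine ⟨_, ⟨v, ⟨v.2, fun h => hv0 (Subtype.ext h)⟩, rfl⟩, ?_⟩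
    rw [← Finset.disjoint_iff_inter_eq_empty, Finset.disjoint_left]
    intro k hk hkS
    have hvk : (v : Fin n → ZMod 2) k = 0 := congrFun hvker ⟨k, hkS⟩
    simp [supp, hvk] at hk
end
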